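/- arXiv:2501.17016 — 9 statements merged into one kernel-verified Lean document; each statement's English description precedes it below -/
import Mathlib

section
/- Under Assumption (A), fix i ∈ {1,…,n} and define Γ'ᵢ := {(λⱼ)_{j≠i} ∈ ℝ^{n−1} : (λ₁,…,λ_{i−1},R,λ_{i+1},…,λₙ) ∈ Γ for all sufficiently large R}. Then: (1) (λⱼ)_{j≠i} ∈ Γ'ᵢ if and only if (λ₁,…,λ_{i−1},R₀,λ_{i+1},…,λₙ) ∈ Γ for some R₀ ∈ ℝ, so Γ'ᵢ is exactly the image of Γ under the projection that forgets the i-th coordinate; (2) Γ'ᵢ is an open convex cone in ℝ^{n−1}, invariant under permutations of its coordinates; (3) Γ'ᵢ = Γ'ⱼ for all i, j (under the order-preserving identification of the remaining index sets); (4) Γ'ᵢ contains the open positive orthant {(λⱼ)_{j≠i} : λⱼ > 0 for all j ≠ i}. -/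
open Filter

/-- Assumption (A) from the paper: `Γ ⊆ ℝⁿ` is an open convex symmetric cone with
`Γₙ ⊆ Γ ⊆ Γ₁`, and `f : Γ → (0,∞)` is smooth, symmetric, concave, with positive partial
derivatives, vanishing at the boundary of `Γ`, and `f(Rλ) → +∞` as `R → +∞`. -/
structure AssumptionA (n : ℕ) (Γ : Set (Fin n → ℝ)) (f : (Fin n → ℝ) → ℝ) : Prop where
  isOpen : IsOpen Γ
  convex : Convex ℝ Γ
  cone : ∀ x ∈ Γ, ∀ t : ℝ, 0 < t → t • x ∈ Γ
  perm_invariant : ∀ x ∈ Γ, ∀ σ : Equiv.Perm (Fin n), (fun i => x (σ i)) ∈ Γ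
  orthant_subset : {x : Fin n → ℝ | ∀ i, 0 < x i} ⊆ Γ
  subset_halfspace : Γ ⊆ {x : Fin n → ℝ | 0 < ∑ i, x i}
  f_pos : ∀ x ∈ Γ, 0 < f x
  f_smooth : ContDiffOn ℝ (⊤ : ℕ∞) f Γ
  f_perm_invariant : ∀ x ∈ Γ, ∀ σ : Equiv.Perm (Fin n), f (fun i => x (σ i)) = f x
  f_concave : ConcaveOn ℝ Γ f
  f_deriv_pos : ∀ x ∈ Γ, ∀ i : Fin n, 0 < fderiv ℝ f x (Pi.single i 1)
  f_boundary_zero : ∀ x₀ ∈ frontier Γ, Tendsto f (nhdsWithin x₀ Γ) (nhds 0)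
  f_proper : ∀ x ∈ Γ, Tendsto (fun R : ℝ => f (R • x)) atTop atTop

/-- `Γ_∞`: the set of `λ ∈ ℝⁿ` such that for every `i`, replacing the `i`-th coordinate by any
sufficiently large `R` lands in `Γ`. -/
def GammaInfty (n : ℕ) (Γ : Set (Fin n → ℝ)) : Set (Fin n → ℝ) :=
  {x | ∀ i : Fin n, ∃ R₀ : ℝ, ∀ R ≥ R₀, Function.update x i R ∈ Γ}

/-- `f_{∞,i}(λ) = lim_{R→+∞} f(λ₁,…,λ_{i−1},R,λ_{i+1},…,λₙ)`, realized as a limsup in `EReal`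
(the limit exists in `(0,+∞]` since `f` is increasing in `λᵢ`). -/
noncomputable def fInftyi (n : ℕ) (f : (Fin n → ℝ) → ℝ) (i : Fin n) (x : Fin n → ℝ) : EReal :=
  Filter.limsup (fun R : ℝ => ((f (Function.update x i R) : ℝ) : EReal)) Filter.atTop

/-- `f_∞(λ) = min_{1 ≤ i ≤ n} f_{∞,i}(λ)`, with values in `(0,+∞]`. -/
noncomputable def fInfty (n : ℕ) (f : (Fin n → ℝ) → ℝ) (x : Fin n → ℝ) : EReal :=
  ⨅ i : Fin n, fInftyi n f i x

/-- `Γ'ᵢ`: the set of `(λⱼ)_{j≠i} ∈ ℝ^{n−1}` such that inserting any sufficiently large `R`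
at position `i` lands in `Γ`. -/
def GammaPrime (m : ℕ) (Γ : Set (Fin (m + 1) → ℝ)) (i : Fin (m + 1)) :
    Set (Fin m → ℝ) :=
  {y | ∃ R₀ : ℝ, ∀ R ≥ R₀, i.insertNth R y ∈ Γ}

/-!
An open set closed under addition that contains the positive orthant is an upper set: if `x ≤ z`,
move `x` slightly down by `(ε, …, ε)` without leaving the set and add the positive vector
`z - x + (ε, …, ε)`. For the upper set `Γ`, membership of `(λ₁, …, R, …, λₙ)` for a single `R` thus
gives membership for all larger `R`, so `Γ'ᵢ` is a projection of `Γ`. The value of `i` is irrelevant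
because any bijection between the coordinates other than `i` and those other than `j` extends to
a permutation of all coordinates sending `i` to `j`.
-/

theorem add_mem_of_convex_of_smul_mem {𝕜 E : Type*} [Field 𝕜] [LinearOrder 𝕜]
    [IsStrictOrderedRing 𝕜] [AddCommGroup E] [Module 𝕜 E] {s : Set E} (hconvex : Convex 𝕜 s)
    (hsmul : ∀ x ∈ s, ∀ t : 𝕜, 0 < t → t • x ∈ s) {x y : E} (hx : x ∈ s) (hy : y ∈ s) :
    x + y ∈ s := by
  have hmid : (2 : 𝕜) • midpoint 𝕜 x y ∈ s := hsmul _ (hconvex.midpoint_mem hx hy) 2 two_pos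
  rwa [two_smul, midpoint_add_self] at hmid

theorem isUpperSet_of_isOpen_of_add_mem {ι : Type*} {s : Set (ι → ℝ)} (hopen : IsOpen s)
    (hadd : ∀ x ∈ s, ∀ y ∈ s, x + y ∈ s) (horthant : {x | ∀ i, 0 < x i} ⊆ s) : IsUpperSet s := by
  intro x z hxz hx
  have hnhds : ∀ᶠ ε : ℝ in nhds 0, (fun i => x i - ε) ∈ s :=
    (hopen.preimage (by fun_prop : Continuous fun ε : ℝ => fun i => x i - ε)).mem_nhds (by simpa)
  obtain ⟨ε, hxε, hε⟩ :=
    ((hnhds.filter_mono nhdsWithin_le_nhds).and (self_mem_nhdsWithin (s := Set.Ioi 0))).exists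
  have hpos : (fun i => z i - x i + ε) ∈ s :=
    horthant fun i => add_pos_of_nonneg_of_pos (sub_nonneg.2 (hxz i)) hε
  convert hadd _ hxε _ hpos using 1
  ext i
  simp

theorem insertNth_smul {n : ℕ} {M α : Type*} [SMul M α] (i : Fin (n + 1)) (c : M) (a : α)
    (y : Fin n → α) :
    (i.insertNth (c • a) (c • y) : Fin (n + 1) → α) = c • (i.insertNth a y : Fin (n + 1) → α) := by
  simp [funext_iff, Fin.forall_iff_succAbove i]

theorem insertNth_comp_perm {n : ℕ} {α : Type*} (i j : Fin (n + 1)) (σ : Equiv.Perm (Fin n))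
    (a : α) (y : Fin n → α) :
    (j.insertNth a (y ∘ σ) : Fin (n + 1) → α) = (i.insertNth a y : Fin (n + 1) → α) ∘
      ((finSuccEquiv' j).trans σ.optionCongr).trans (finSuccEquiv' i).symm := by
  simp [funext_iff, Fin.forall_iff_succAbove j]

section GammaPrime

variable {m : ℕ} {Γ : Set (Fin (m + 1) → ℝ)} {i : Fin (m + 1)} {y : Fin m → ℝ}

theorem mem_gammaPrime_iff_eventually :
    y ∈ GammaPrime m Γ i ↔ ∀ᶠ R in atTop, (i.insertNth R y : Fin (m + 1) → ℝ) ∈ Γ :=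
  eventually_atTop.symm

theorem mem_gammaPrime_iff_exists (hΓ : IsUpperSet Γ) :
    y ∈ GammaPrime m Γ i ↔ ∃ R : ℝ, i.insertNth R y ∈ Γ := by
  refine exists_congr fun R => ⟨fun h => h R le_rfl, fun h R' hR => hΓ ?_ h⟩
  simpa [Pi.le_def, Fin.forall_iff_succAbove i] using hR

theorem gammaPrime_eq_image (hΓ : IsUpperSet Γ) :
    GammaPrime m Γ i = (fun x : Fin (m + 1) → ℝ => x ∘ i.succAbove) '' Γ := by
  ext y
  rw [mem_gammaPrime_iff_exists hΓ]
  constructor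
  · rintro ⟨R, hR⟩
    exact ⟨_, hR, Fin.insertNth_comp_succAbove i R y⟩
  · rintro ⟨x, hx, rfl⟩
    exact ⟨x i, (Fin.insertNth_self_removeNth i x).symm ▸ hx⟩

theorem isOpen_gammaPrime (hopen : IsOpen Γ) (hΓ : IsUpperSet Γ) :
    IsOpen (GammaPrime m Γ i) := by
  have hUnion : GammaPrime m Γ i = ⋃ R : ℝ, (fun y : Fin m → ℝ => i.insertNth R y) ⁻¹' Γ := by
    ext y
    simp [mem_gammaPrime_iff_exists hΓ]
  rw [hUnion]
  exact isOpen_iUnion fun R => hopen.preimage (continuous_const.finInsertNth i continuous_id)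

theorem convex_gammaPrime (hconvex : Convex ℝ Γ) : Convex ℝ (GammaPrime m Γ i) := by
  intro y hy z hz a b ha hb hab
  rw [mem_gammaPrime_iff_eventually] at hy hz ⊢
  filter_upwards [hy, hz] with R hyR hzR
  have hcombo := hconvex hyR hzR ha hb hab
  rwa [← insertNth_smul, ← insertNth_smul, ← Fin.insertNth_add, Convex.combo_self hab] at hcombo

theorem smul_mem_gammaPrime (hsmul : ∀ x ∈ Γ, ∀ t : ℝ, 0 < t → t • x ∈ Γ)
    (hy : y ∈ GammaPrime m Γ i) {t : ℝ} (ht : 0 < t) : t • y ∈ GammaPrime m Γ i := by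
  rw [mem_gammaPrime_iff_eventually] at hy ⊢
  have hscale : Tendsto (fun R : ℝ => t⁻¹ • R) atTop atTop :=
    tendsto_id.const_mul_atTop (inv_pos.2 ht)
  filter_upwards [hscale.eventually hy] with R hR
  simpa only [← insertNth_smul, smul_inv_smul₀ ht.ne'] using hsmul _ hR t ht

theorem comp_perm_mem_gammaPrime (hperm : ∀ x ∈ Γ, ∀ σ : Equiv.Perm (Fin (m + 1)), x ∘ σ ∈ Γ)
    (hy : y ∈ GammaPrime m Γ i) (j : Fin (m + 1)) (σ : Equiv.Perm (Fin m)) :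
    y ∘ σ ∈ GammaPrime m Γ j := by
  rw [mem_gammaPrime_iff_eventually] at hy ⊢
  filter_upwards [hy] with R hR
  rw [insertNth_comp_perm i j]
  exact hperm _ hR _

theorem gammaPrime_eq_gammaPrime
    (hperm : ∀ x ∈ Γ, ∀ σ : Equiv.Perm (Fin (m + 1)), x ∘ σ ∈ Γ) (i j : Fin (m + 1)) :
    GammaPrime m Γ i = GammaPrime m Γ j :=
  Set.Subset.antisymm (fun _ hy => comp_perm_mem_gammaPrime hperm hy j 1)
    fun _ hy => comp_perm_mem_gammaPrime hperm hy i 1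

theorem orthant_subset_gammaPrime (horthant : {x | ∀ k, 0 < x k} ⊆ Γ) :
    {y | ∀ k, 0 < y k} ⊆ GammaPrime m Γ i := by
  intro y hy
  rw [mem_gammaPrime_iff_eventually]
  filter_upwards [eventually_gt_atTop 0] with R hR
  exact horthant ((Fin.forall_iff_succAbove i).2 (by simpa using ⟨hR, hy⟩))

end GammaPrime

theorem stmt_1_general (m : ℕ) (Γ : Set (Fin (m + 1) → ℝ)) (hopen : IsOpen Γ)
    (hconvex : Convex ℝ Γ) (hsmul : ∀ x ∈ Γ, ∀ t : ℝ, 0 < t → t • x ∈ Γ)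
    (hperm : ∀ x ∈ Γ, ∀ σ : Equiv.Perm (Fin (m + 1)), (fun k => x (σ k)) ∈ Γ)
    (horthant : {x : Fin (m + 1) → ℝ | ∀ k, 0 < x k} ⊆ Γ) (i : Fin (m + 1)) :
    (∀ y : Fin m → ℝ, y ∈ GammaPrime m Γ i ↔ ∃ R₀ : ℝ, i.insertNth R₀ y ∈ Γ) ∧
    GammaPrime m Γ i = (fun x : Fin (m + 1) → ℝ => x ∘ i.succAbove) '' Γ ∧
    IsOpen (GammaPrime m Γ i) ∧
    Convex ℝ (GammaPrime m Γ i) ∧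
    (∀ y ∈ GammaPrime m Γ i, ∀ t : ℝ, 0 < t → t • y ∈ GammaPrime m Γ i) ∧
    (∀ y ∈ GammaPrime m Γ i, ∀ σ : Equiv.Perm (Fin m),
      (fun k => y (σ k)) ∈ GammaPrime m Γ i) ∧
    (∀ j : Fin (m + 1), GammaPrime m Γ i = GammaPrime m Γ j) ∧
    {y : Fin m → ℝ | ∀ k, 0 < y k} ⊆ GammaPrime m Γ i := by
  have hupper : IsUpperSet Γ := isUpperSet_of_isOpen_of_add_mem hopen
    (fun _ hx _ hy => add_mem_of_convex_of_smul_mem hconvex hsmul hx hy) horthant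
  exact ⟨fun _ => mem_gammaPrime_iff_exists hupper,
    gammaPrime_eq_image hupper,
    isOpen_gammaPrime hopen hupper,
    convex_gammaPrime hconvex,
    fun _ hy _ ht => smul_mem_gammaPrime hsmul hy ht,
    fun _ hy σ => comp_perm_mem_gammaPrime hperm hy i σ,
    gammaPrime_eq_gammaPrime hperm i,
    orthant_subset_gammaPrime horthant⟩

/-- Lemma 2.4 (1),(2) of the paper: `Γ'ᵢ` is the projection of `Γ` forgetting the `i`-th
coordinate; it is an open convex cone, invariant under permutations of its coordinates,
independent of `i`, and contains the open positive orthant. -/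
theorem stmt_1 (m : ℕ) (Γ : Set (Fin (m + 1) → ℝ)) (f : (Fin (m + 1) → ℝ) → ℝ)
    (hA : AssumptionA (m + 1) Γ f) (i : Fin (m + 1)) :
    (∀ y : Fin m → ℝ, y ∈ GammaPrime m Γ i ↔ ∃ R₀ : ℝ, i.insertNth R₀ y ∈ Γ) ∧
    GammaPrime m Γ i = (fun x : Fin (m + 1) → ℝ => x ∘ i.succAbove) '' Γ ∧
    IsOpen (GammaPrime m Γ i) ∧
    Convex ℝ (GammaPrime m Γ i) ∧
    (∀ y ∈ GammaPrime m Γ i, ∀ t : ℝ, 0 < t → t • y ∈ GammaPrime m Γ i) ∧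
    (∀ y ∈ GammaPrime m Γ i, ∀ σ : Equiv.Perm (Fin m),
      (fun k => y (σ k)) ∈ GammaPrime m Γ i) ∧
    (∀ j : Fin (m + 1), GammaPrime m Γ i = GammaPrime m Γ j) ∧
    {y : Fin m → ℝ | ∀ k, 0 < y k} ⊆ GammaPrime m Γ i := by
  exact stmt_1_general m Γ hA.isOpen hA.convex hA.cone hA.perm_invariant hA.orthant_subset i
end

section
/- Under Assumption (A), fix i ∈ {1,…,n}. For R ∈ ℝ define f_{R,i} on Γ'_{R,i} := {(λⱼ)_{j≠i} : (λ₁,…,λ_{i−1},R,λ_{i+1},…,λₙ) ∈ Γ} by f_{R,i}((λⱼ)_{j≠i}) := f(λ₁,…,λ_{i−1},R,λ_{i+1},…,λₙ). Then the sets Γ'_{R,i} are convex and increase with R, f_{R,i} is monotone nondecreasing in R, and exactly one of the following holds: either f_{∞,i} ≡ +∞ on Γ'ᵢ, or f_{∞,i} is finite at every point of Γ'ᵢ, is a concave function on Γ'ᵢ, and f_{R,i} → f_{∞,i} as R → +∞ uniformly on every compact subset of Γ'ᵢ. -/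
open Filter

/-!
Fix a coordinate `i`. A concave function that is bounded below on a ray is nondecreasing along it,
so `R ↦ f (i.insertNth R y)` is nondecreasing, and the slices of `f` form an increasing family of
concave functions on an increasing family of open convex sets.

For such a family `φ R`, suppose `φ R x → +∞` at one point `x` of the union of the domains. Any
other point `y` of the union lies strictly between `x` and a third point `z` of it, and concavity
gives `a * φ R x + b * φ R z ≤ φ R y` with `0 < a, b`; since `φ R z` is eventually bounded below,
`φ R y → +∞` too. Hence either the limit is `+∞` everywhere, or it is finite everywhere. In the
latter case the limit is concave, hence continuous, and Dini's theorem upgrades monotone pointwise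
convergence to uniform convergence on compact sets.
-/

open AffineMap Topology

section Concave

variable {E : Type*} [AddCommGroup E] [Module ℝ E] {f : E → ℝ} {s : Set E}

lemma le_add_of_concaveOn_of_ray_bddBelow (hf : ConcaveOn ℝ s f) {x v : E} {c : ℝ}
    (hmem : ∀ t : ℝ, 0 ≤ t → x + t • v ∈ s) (hc : ∀ t : ℝ, 0 ≤ t → c ≤ f (x + t • v)) :
    f x ≤ f (x + v) := by
  have hx : x ∈ s := by simpa using hmem 0 le_rfl
  have hlim : Tendsto (fun ε : ℝ ↦ (1 - ε) * f x + ε * c) (𝓝[>] 0) (𝓝 (f x)) := by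
    have hcont : Continuous fun ε : ℝ ↦ (1 - ε) * f x + ε * c := by fun_prop
    simpa using (hcont.tendsto 0).mono_left nhdsWithin_le_nhds
  refine le_of_tendsto hlim ?_
  filter_upwards [Ioo_mem_nhdsGT one_pos] with ε ⟨hε₀, hε₁⟩
  have hcomb : (1 - ε) • x + ε • (x + ε⁻¹ • v) = x + v := by
    rw [smul_add, smul_inv_smul₀ hε₀.ne', sub_smul, one_smul]
    abel
  calc (1 - ε) * f x + ε * c
    _ ≤ (1 - ε) * f x + ε * f (x + ε⁻¹ • v) := by
      gcongr
      exact hc _ (inv_nonneg.2 hε₀.le)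
    _ ≤ f ((1 - ε) • x + ε • (x + ε⁻¹ • v)) :=
      hf.2 hx (hmem _ (inv_nonneg.2 hε₀.le)) (sub_nonneg.2 hε₁.le) hε₀.le (sub_add_cancel 1 ε)
    _ = f (x + v) := by rw [hcomb]

variable [TopologicalSpace E] [IsTopologicalAddGroup E] [ContinuousSMul ℝ E]

lemma add_mem_of_isOpen_of_mem_closure (hs_open : IsOpen s) (hs : Convex ℝ s)
    (hs_cone : ∀ x ∈ s, ∀ t : ℝ, 0 < t → t • x ∈ s) {x v : E} (hx : x ∈ s)
    (hv : v ∈ closure s) : x + v ∈ s := by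
  have hmid : (2⁻¹ : ℝ) • x + (2⁻¹ : ℝ) • v ∈ s := interior_subset <|
    hs.combo_interior_closure_mem_interior (hs_open.interior_eq.symm ▸ hx) hv
      (by norm_num) (by norm_num) (by norm_num)
  simpa [smul_add, smul_smul] using hs_cone _ hmid 2 two_pos

lemma exists_mem_openSegment_of_isOpen (hs : IsOpen s) (x : E) {y : E} (hy : y ∈ s) :
    ∃ z ∈ s, y ∈ openSegment ℝ x z := by
  have hhom : ∀ᶠ t : ℝ in 𝓝[>] 1, homothety x t y ∈ s :=
    (eventually_homothety_mem_of_mem_interior ℝ x (hs.interior_eq.symm ▸ hy)).filter_mono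
      nhdsWithin_le_nhds
  obtain ⟨t, hts, ht⟩ := (hhom.and self_mem_nhdsWithin).exists
  replace ht : 1 < t := ht
  have hy_eq : lineMap x (homothety x t y) t⁻¹ = y := by
    simp [lineMap_apply, homothety_apply, inv_smul_smul₀ (zero_lt_one.trans ht).ne']
  refine ⟨homothety x t y, hts, ?_⟩
  simpa only [hy_eq] using lineMap_mem_openSegment ℝ x (homothety x t y)
    ⟨inv_pos.2 (zero_lt_one.trans ht), inv_lt_one_of_one_lt₀ ht⟩

end Concave

lemma closure_setOf_forall_pos (ι : Type*) :
    closure {x : ι → ℝ | ∀ j, 0 < x j} = Set.Ici 0 := by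
  have hpi : {x : ι → ℝ | ∀ j, 0 < x j} = Set.univ.pi fun _ ↦ Set.Ioi 0 := by
    ext; simp
  rw [hpi, closure_pi_set]
  simp only [closure_Ioi, Set.pi_univ_Ici]
  rfl

/-- A family of concave functions `φ R` on open convex domains `s R`, with both the domains and the
functions nondecreasing in `R`. Convexity of `s R` is part of `ConcaveOn`. -/
structure IncreasingConcaveFamily {ι E : Type*} [Preorder ι] [TopologicalSpace E]
    [AddCommGroup E] [Module ℝ E] (s : ι → Set E) (φ : ι → E → ℝ) : Prop where
  monotone_domain : Monotone s
  isOpen : ∀ R, IsOpen (s R)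
  concaveOn : ∀ R, ConcaveOn ℝ (s R) (φ R)
  le_of_le : ∀ ⦃R R'⦄, R ≤ R' → ∀ ⦃x⦄, x ∈ s R → φ R x ≤ φ R' x

namespace IncreasingConcaveFamily

section TopologicalVectorSpace

variable {ι E : Type*} [Preorder ι] [TopologicalSpace E] [AddCommGroup E] [Module ℝ E]
  {s : ι → Set E} {φ : ι → E → ℝ}

lemma monotone_apply (h : IncreasingConcaveFamily s φ) {x : E} {R₀ : ι} (hx : x ∈ s R₀) :
    Monotone fun R : Set.Ici R₀ ↦ φ R x :=
  fun R _ hRS ↦ h.le_of_le hRS (h.monotone_domain R.2 hx)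

lemma eventually_mem (h : IncreasingConcaveFamily s φ) {x : E} (hx : x ∈ ⋃ R, s R) :
    ∀ᶠ R in atTop, x ∈ s R := by
  obtain ⟨R₀, hR₀⟩ := Set.mem_iUnion.1 hx
  filter_upwards [eventually_ge_atTop R₀] with R hR
  exact h.monotone_domain hR hR₀

lemma tendsto_atTop_of_tendsto_atTop [IsTopologicalAddGroup E] [ContinuousSMul ℝ E]
    (h : IncreasingConcaveFamily s φ) {x y : E} (hx : x ∈ ⋃ R, s R) (hy : y ∈ ⋃ R, s R)
    (hlim : Tendsto (φ · x) atTop atTop) : Tendsto (φ · y) atTop atTop := by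
  obtain ⟨z, hz, a, b, ha, hb, hab, hy_eq⟩ :=
    exists_mem_openSegment_of_isOpen (isOpen_iUnion h.isOpen) x hy
  obtain ⟨R₀, hzR₀⟩ := Set.mem_iUnion.1 hz
  refine tendsto_atTop_mono' _ ?_
    (tendsto_atTop_add_const_right _ (b * φ R₀ z) (hlim.const_mul_atTop ha))
  filter_upwards [h.eventually_mem hx, eventually_ge_atTop R₀] with R hxR hR
  calc a * φ R x + b * φ R₀ z
    _ ≤ a * φ R x + b * φ R z := by
      gcongr
      exact h.le_of_le hR hzR₀
    _ ≤ φ R (a • x + b • z) :=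
      (h.concaveOn R).2 hxR (h.monotone_domain hR hzR₀) ha.le hb.le hab
    _ = φ R y := by rw [hy_eq]

variable [IsDirectedOrder ι]

lemma convex_iUnion (h : IncreasingConcaveFamily s φ) : Convex ℝ (⋃ R, s R) :=
  h.monotone_domain.directed_le.convex_iUnion fun R ↦ (h.concaveOn R).1

lemma tendsto_atTop_or_exists_tendsto_nhds (h : IncreasingConcaveFamily s φ) {x : E}
    (hx : x ∈ ⋃ R, s R) :
    Tendsto (φ · x) atTop atTop ∨ ∃ l, Tendsto (φ · x) atTop (𝓝 l) := by
  obtain ⟨R₀, hR₀⟩ := Set.mem_iUnion.1 hx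
  simpa only [tendsto_comp_val_Ici_atTop (f := (φ · x))] using
    tendsto_atTop_of_monotone (h.monotone_apply hR₀)

lemma concaveOn_of_tendsto [Nonempty ι] (h : IncreasingConcaveFamily s φ) {g : E → ℝ}
    (hg : ∀ x ∈ ⋃ R, s R, Tendsto (φ · x) atTop (𝓝 (g x))) :
    ConcaveOn ℝ (⋃ R, s R) g := by
  refine ⟨h.convex_iUnion, fun x hx y hy a b ha hb hab ↦ ?_⟩
  refine le_of_tendsto_of_tendsto (((hg x hx).const_mul a).add ((hg y hy).const_mul b))
    (hg _ (h.convex_iUnion hx hy ha hb hab)) ?_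
  filter_upwards [h.eventually_mem hx, h.eventually_mem hy] with R hxR hyR
  exact (h.concaveOn R).2 hxR hyR ha hb hab

end TopologicalVectorSpace

variable {ι E : Type*} [Preorder ι] [IsDirectedOrder ι] [Nonempty ι]
  [NormedAddCommGroup E] [NormedSpace ℝ E] [FiniteDimensional ℝ E]
  {s : ι → Set E} {φ : ι → E → ℝ}

lemma tendstoUniformlyOn_of_isCompact (h : IncreasingConcaveFamily s φ) {g : E → ℝ}
    (hg : ∀ x ∈ ⋃ R, s R, Tendsto (φ · x) atTop (𝓝 (g x))) {K : Set E}
    (hKs : K ⊆ ⋃ R, s R) (hK : IsCompact K) : TendstoUniformlyOn φ g atTop K := by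
  obtain ⟨R₀, hR₀⟩ := hK.elim_directed_cover s h.isOpen hKs h.monotone_domain.directed_le
  have hg_cont : ContinuousOn g K :=
    ((h.concaveOn_of_tendsto hg).continuousOn (isOpen_iUnion h.isOpen)).mono hKs
  have hφ_cont (R : Set.Ici R₀) : ContinuousOn (φ R) K :=
    ((h.concaveOn R).continuousOn (h.isOpen R)).mono (hR₀.trans (h.monotone_domain R.2))
  have hdini : TendstoUniformlyOn (fun R : Set.Ici R₀ ↦ φ R) g atTop K :=
    Monotone.tendstoUniformlyOn_of_forall_tendsto hK hφ_cont
      (fun x hx ↦ h.monotone_apply (hR₀ hx)) hg_cont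
      (fun x hx ↦ tendsto_comp_val_Ici_atTop.2 (hg x (hKs hx)))
  intro u hu
  rw [← map_val_Ici_atTop R₀, eventually_map]
  exact hdini u hu

theorem xor_tendsto_atTop_concaveOn_limit (h : IncreasingConcaveFamily s φ)
    (hne : (⋃ R, s R).Nonempty) :
    Xor (∀ x ∈ ⋃ R, s R, Tendsto (φ · x) atTop atTop)
      (∃ g : E → ℝ, ConcaveOn ℝ (⋃ R, s R) g ∧
        (∀ x ∈ ⋃ R, s R, Tendsto (φ · x) atTop (𝓝 (g x))) ∧
        ∀ K ⊆ ⋃ R, s R, IsCompact K → TendstoUniformlyOn φ g atTop K) := by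
  by_cases hinf : ∀ x ∈ ⋃ R, s R, Tendsto (φ · x) atTop atTop
  · obtain ⟨x, hx⟩ := hne
    exact .inl ⟨hinf, fun ⟨_, _, hg, _⟩ ↦ not_tendsto_nhds_of_tendsto_atTop (hinf x hx) _ (hg x hx)⟩
  · refine .inr ⟨?_, hinf⟩
    have hfin : ∀ x ∈ ⋃ R, s R, ∃ l, Tendsto (φ · x) atTop (𝓝 l) := fun x hx ↦
      (h.tendsto_atTop_or_exists_tendsto_nhds hx).resolve_left fun hx_lim ↦
        hinf fun _ hy ↦ h.tendsto_atTop_of_tendsto_atTop hx hy hx_lim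
    choose! g hg using hfin
    exact ⟨g, h.concaveOn_of_tendsto hg, hg, fun _ ↦ h.tendstoUniformlyOn_of_isCompact hg⟩

end IncreasingConcaveFamily

section Slices

/-- The map `y ↦ i.insertNth x y`, inserting the fixed entry `x` at position `i`, as an affine map.
It makes the slices of convex sets and of concave functions instances of affine preimages. -/
def insertNthAffineMap (𝕜 : Type*) [Ring 𝕜] {m : ℕ} {M : Type*} [AddCommGroup M] [Module 𝕜 M]
    (i : Fin (m + 1)) (x : M) : (Fin m → M) →ᵃ[𝕜] (Fin (m + 1) → M) where
  toFun y := i.insertNth x y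
  linear :=
    { toFun := fun y ↦ i.insertNth 0 y
      map_add' := fun y z ↦ by simpa using Fin.insertNth_add (α := fun _ ↦ M) i 0 0 y z
      map_smul' := fun c y ↦ by
        refine Fin.insertNth_eq_iff.2 ⟨?_, ?_⟩
        · simp
        · ext j; simp [Fin.removeNth] }
  map_vadd' y z := by simpa using Fin.insertNth_add (α := fun _ ↦ M) i 0 x z y

lemma insertNth_eq_add_single {m : ℕ} {M : Type*} [AddCommGroup M] (i : Fin (m + 1)) (a b : M)
    (y : Fin m → M) :
    (i.insertNth b y : Fin (m + 1) → M) = i.insertNth a y + Pi.single i (b - a) := by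
  rw [← Fin.insertNth_sub_same (α := fun _ ↦ M) i b a y, add_sub_cancel]

variable {m : ℕ} {Γ : Set (Fin (m + 1) → ℝ)} {f : (Fin (m + 1) → ℝ) → ℝ} {i : Fin (m + 1)}

lemma gammaPrime_eq_iUnion (hmono : Monotone fun R : ℝ ↦ {y : Fin m → ℝ | i.insertNth R y ∈ Γ}) :
    GammaPrime m Γ i = ⋃ R : ℝ, {y : Fin m → ℝ | i.insertNth R y ∈ Γ} := by
  ext y
  rw [Set.mem_iUnion]
  exact ⟨fun ⟨R₀, hR₀⟩ ↦ ⟨R₀, hR₀ R₀ le_rfl⟩, fun ⟨R₀, hR₀⟩ ↦ ⟨R₀, fun _ hR ↦ hmono hR hR₀⟩⟩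

lemma increasingConcaveFamily_insertNth (hΓ : IsOpen Γ)
    (hray : ∀ x ∈ Γ, ∀ t : ℝ, 0 ≤ t → x + Pi.single i t ∈ Γ) (hf : ConcaveOn ℝ Γ f)
    (hbdd : BddBelow (f '' Γ)) :
    IncreasingConcaveFamily (fun R : ℝ ↦ {y : Fin m → ℝ | i.insertNth R y ∈ Γ})
      (fun R y ↦ f (i.insertNth R y)) where
  monotone_domain R R' hR y hy := by
    rw [Set.mem_ofPred_eq, insertNth_eq_add_single i R R' y]
    exact hray _ hy _ (sub_nonneg.2 hR)
  isOpen R := hΓ.preimage (continuous_const.finInsertNth i continuous_id)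
  concaveOn R := hf.comp_affineMap (insertNthAffineMap ℝ i R)
  le_of_le R R' hR y hy := by
    obtain ⟨c, hc⟩ := hbdd
    have hmem (t : ℝ) (ht : 0 ≤ t) : i.insertNth R y + t • Pi.single i (R' - R) ∈ Γ := by
      rw [← Pi.single_smul]
      exact hray _ hy _ (mul_nonneg ht (sub_nonneg.2 hR))
    rw [insertNth_eq_add_single i R R' y]
    exact le_add_of_concaveOn_of_ray_bddBelow hf hmem
      fun t ht ↦ hc (Set.mem_image_of_mem f (hmem t ht))

end Slices

namespace AssumptionA

variable {n : ℕ} {Γ : Set (Fin n → ℝ)} {f : (Fin n → ℝ) → ℝ}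

lemma nonempty (hA : AssumptionA n Γ f) : Γ.Nonempty :=
  ⟨1, hA.orthant_subset fun _ ↦ one_pos⟩

lemma add_mem_of_nonneg (hA : AssumptionA n Γ f) {x v : Fin n → ℝ} (hx : x ∈ Γ) (hv : 0 ≤ v) :
    x + v ∈ Γ := by
  refine add_mem_of_isOpen_of_mem_closure hA.isOpen hA.convex hA.cone hx ?_
  exact closure_mono hA.orthant_subset (closure_setOf_forall_pos (Fin n) ▸ hv)

lemma bddBelow_image (hA : AssumptionA n Γ f) : BddBelow (f '' Γ) :=
  ⟨0, Set.forall_mem_image.2 fun x hx ↦ (hA.f_pos x hx).le⟩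

end AssumptionA

theorem stmt_2_general {m : ℕ} {Γ : Set (Fin (m + 1) → ℝ)} {f : (Fin (m + 1) → ℝ) → ℝ}
    {i : Fin (m + 1)} (hΓ : IsOpen Γ) (hne : Γ.Nonempty)
    (hray : ∀ x ∈ Γ, ∀ t : ℝ, 0 ≤ t → x + Pi.single i t ∈ Γ) (hf : ConcaveOn ℝ Γ f)
    (hbdd : BddBelow (f '' Γ)) :
    (∀ R : ℝ, Convex ℝ {y : Fin m → ℝ | i.insertNth R y ∈ Γ}) ∧
    (∀ R R' : ℝ, R ≤ R' →
      {y : Fin m → ℝ | i.insertNth R y ∈ Γ} ⊆ {y : Fin m → ℝ | i.insertNth R' y ∈ Γ}) ∧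
    (∀ R R' : ℝ, R ≤ R' → ∀ y : Fin m → ℝ, i.insertNth R y ∈ Γ →
      f (i.insertNth R y) ≤ f (i.insertNth R' y)) ∧
    Xor
      (∀ y ∈ GammaPrime m Γ i, Tendsto (fun R : ℝ ↦ f (i.insertNth R y)) atTop atTop)
      (∃ g : (Fin m → ℝ) → ℝ,
        ConcaveOn ℝ (GammaPrime m Γ i) g ∧
        (∀ y ∈ GammaPrime m Γ i,
          Tendsto (fun R : ℝ ↦ f (i.insertNth R y)) atTop (𝓝 (g y))) ∧
        (∀ K ⊆ GammaPrime m Γ i, IsCompact K →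
          TendstoUniformlyOn (fun (R : ℝ) (y : Fin m → ℝ) ↦ f (i.insertNth R y)) g atTop K)) := by
  have hfam := increasingConcaveFamily_insertNth hΓ hray hf hbdd
  refine ⟨fun R ↦ (hfam.concaveOn R).1, hfam.monotone_domain, fun _ _ hR _ hy ↦
    hfam.le_of_le hR hy, ?_⟩
  rw [gammaPrime_eq_iUnion hfam.monotone_domain]
  obtain ⟨x, hx⟩ := hne
  have hslice : i.insertNth (x i) (i.removeNth x) ∈ Γ := by rwa [Fin.insertNth_self_removeNth]
  exact hfam.xor_tendsto_atTop_concaveOn_limit ⟨_, Set.mem_iUnion.2 ⟨x i, hslice⟩⟩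

/-- Lemma 2.4 (3) of the paper: the slice domains `Γ'_{R,i}` are convex and increase with `R`,
the slice functions `f_{R,i}` are nondecreasing in `R`, and exactly one of the following holds:
either `f_{∞,i} ≡ +∞` on `Γ'ᵢ`, or `f_{∞,i}` is finite everywhere on `Γ'ᵢ`, concave, and the
convergence `f_{R,i} → f_{∞,i}` is uniform on compact subsets of `Γ'ᵢ`. -/
theorem stmt_2 (m : ℕ) (Γ : Set (Fin (m + 1) → ℝ)) (f : (Fin (m + 1) → ℝ) → ℝ)
    (hA : AssumptionA (m + 1) Γ f) (i : Fin (m + 1)) :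
    (∀ R : ℝ, Convex ℝ {y : Fin m → ℝ | i.insertNth R y ∈ Γ}) ∧
    (∀ R R' : ℝ, R ≤ R' →
      {y : Fin m → ℝ | i.insertNth R y ∈ Γ} ⊆ {y : Fin m → ℝ | i.insertNth R' y ∈ Γ}) ∧
    (∀ R R' : ℝ, R ≤ R' → ∀ y : Fin m → ℝ, i.insertNth R y ∈ Γ →
      f (i.insertNth R y) ≤ f (i.insertNth R' y)) ∧
    Xor'
      (∀ y ∈ GammaPrime m Γ i,
        Tendsto (fun R : ℝ => f (i.insertNth R y)) atTop atTop)
      (∃ g : (Fin m → ℝ) → ℝ,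
        ConcaveOn ℝ (GammaPrime m Γ i) g ∧
        (∀ y ∈ GammaPrime m Γ i,
          Tendsto (fun R : ℝ => f (i.insertNth R y)) atTop (nhds (g y))) ∧
        (∀ K ⊆ GammaPrime m Γ i, IsCompact K →
          TendstoUniformlyOn (fun (R : ℝ) (y : Fin m → ℝ) => f (i.insertNth R y)) g
            atTop K)) :=
  stmt_2_general hA.isOpen hA.nonempty
    (fun _ hx _ ht ↦ hA.add_mem_of_nonneg hx (Pi.single_nonneg.2 ht)) hA.f_concave hA.bddBelow_image
end

section
/- Under Assumption (A), suppose f_∞ is finite at every point of Γ_∞. Then f_∞ : Γ_∞ → ℝ is concave, invariant under permutations of the coordinates, monotone nondecreasing in each variable, and strictly positive on Γ_∞. -/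
open Filter

/-!
A function with nonnegative partial derivatives is nondecreasing on a convex set, so for
`x ∈ Γ_∞` the function `R ↦ f (x₁, …, R, …, xₙ)` is eventually nondecreasing and its limsup and
liminf agree. Monotonicity, positivity and symmetry then survive taking limsups and the minimum
over `i`. Concavity is the superadditivity `limsup u + liminf v ≤ limsup (u + v)` in `EReal`;
applying it to each `f_{∞,i}` before taking the minimum lets a single `f_{∞,i}` be infinite.
-/

section Monotone

theorem monotoneOn_of_fderiv_single_nonneg {ι : Type*} [Finite ι] [DecidableEq ι]
    {s : Set (ι → ℝ)} {f : (ι → ℝ) → ℝ} (hs : Convex ℝ s)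
    (hf : ∀ x ∈ s, DifferentiableAt ℝ f x)
    (hf' : ∀ x ∈ s, ∀ i, 0 ≤ fderiv ℝ f x (Pi.single i 1)) : MonotoneOn f s := by
  cases nonempty_fintype ι
  intro x hx y hy hxy
  obtain ⟨z, hz, hdiff⟩ :=
    domain_mvt (fun w hw => (hf w hw).hasFDerivAt.hasFDerivWithinAt) hs hx hy
  have hexpand : fderiv ℝ f z (y - x) = ∑ i, (y - x) i * fderiv ℝ f z (Pi.single i 1) := by
    conv_lhs => rw [pi_eq_sum_univ' (y - x)]
    simp only [map_sum, map_smul, smul_eq_mul]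
  have hnonneg : 0 ≤ fderiv ℝ f z (y - x) := by
    rw [hexpand]
    exact Finset.sum_nonneg fun i _ =>
      mul_nonneg (sub_nonneg.2 (hxy i)) (hf' z (hs.segment_subset hx hy hz) i)
  linarith

variable {α β : Type*} [SemilatticeSup α] [CompleteLattice β] {u : α → β} {a : α}

theorem le_liminf_atTop_of_monotoneOn_Ici (hu : MonotoneOn u (Set.Ici a)) {b : α} (hab : a ≤ b) :
    u b ≤ liminf u atTop :=
  le_liminf_of_le (h := (eventually_ge_atTop b).mono fun _ hbc => hu hab (hab.trans hbc) hbc)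

theorem limsup_atTop_eq_liminf_of_monotoneOn_Ici (hu : MonotoneOn u (Set.Ici a)) :
    limsup u atTop = liminf u atTop := by
  have : Nonempty α := ⟨a⟩
  refine le_antisymm (limsup_le_of_le (h := ?_)) liminf_le_limsup
  exact (eventually_ge_atTop a).mono fun _ hab => le_liminf_atTop_of_monotoneOn_Ici hu hab

end Monotone

theorem update_smul_add_smul {ι 𝕜 E : Type*} [DecidableEq ι] [Semiring 𝕜] [AddCommMonoid E]
    [Module 𝕜 E] (x y : ι → E) {a b : 𝕜} (hab : a + b = 1) (i : ι) (c : E) :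
    Function.update (a • x + b • y) i c
      = a • Function.update x i c + b • Function.update y i c := by
  rw [← Function.update_smul, ← Function.update_smul, ← Function.update_add,
    Convex.combo_self hab]

section Infinity

variable {n : ℕ} {Γ : Set (Fin n → ℝ)} {f : (Fin n → ℝ) → ℝ} {x y : Fin n → ℝ}

theorem eventually_update_mem (hx : x ∈ GammaInfty n Γ) (i : Fin n) :
    ∀ᶠ R in atTop, Function.update x i R ∈ Γ :=
  eventually_atTop.2 (hx i)

theorem convex_gammaInfty (hΓ : Convex ℝ Γ) : Convex ℝ (GammaInfty n Γ) := by
  intro x hx y hy a b ha hb hab i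
  refine eventually_atTop.1 ?_
  filter_upwards [eventually_update_mem hx i, eventually_update_mem hy i] with R hxR hyR
  rw [update_smul_add_smul x y hab]
  exact hΓ hxR hyR ha hb hab

theorem monotoneOn_coe_update (hf : MonotoneOn f Γ) {i : Fin n} {R₀ : ℝ}
    (hx : ∀ R ≥ R₀, Function.update x i R ∈ Γ) :
    MonotoneOn (fun R : ℝ => (f (Function.update x i R) : EReal)) (Set.Ici R₀) :=
  fun R hR S hS hRS =>
    EReal.coe_le_coe_iff.2 (hf (hx R hR) (hx S hS) (Function.update_mono hRS))

theorem fInftyi_eq_liminf (hf : MonotoneOn f Γ) (hx : x ∈ GammaInfty n Γ) (i : Fin n) :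
    fInftyi n f i x = liminf (fun R : ℝ => (f (Function.update x i R) : EReal)) atTop := by
  obtain ⟨R₀, hR₀⟩ := hx i
  exact limsup_atTop_eq_liminf_of_monotoneOn_Ici (monotoneOn_coe_update hf hR₀)

theorem fInftyi_pos (hf : MonotoneOn f Γ) (hpos : ∀ x ∈ Γ, 0 < f x)
    (hx : x ∈ GammaInfty n Γ) (i : Fin n) : 0 < fInftyi n f i x := by
  obtain ⟨R₀, hR₀⟩ := hx i
  calc (0 : EReal) < f (Function.update x i R₀) := EReal.coe_pos.2 (hpos _ (hR₀ R₀ le_rfl))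
    _ ≤ liminf (fun R : ℝ => (f (Function.update x i R) : EReal)) atTop :=
      le_liminf_atTop_of_monotoneOn_Ici (monotoneOn_coe_update hf hR₀) le_rfl
    _ = fInftyi n f i x := (fInftyi_eq_liminf hf hx i).symm

theorem fInfty_pos (hf : MonotoneOn f Γ) (hpos : ∀ x ∈ Γ, 0 < f x)
    (hx : x ∈ GammaInfty n Γ) : 0 < fInfty n f x := by
  rw [fInfty, ← Finset.inf_univ_eq_iInf, Finset.lt_inf_iff EReal.zero_lt_top]
  exact fun i _ => fInftyi_pos hf hpos hx i

theorem fInfty_mono (hf : MonotoneOn f Γ) (hx : x ∈ GammaInfty n Γ) (hy : y ∈ GammaInfty n Γ)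
    (hxy : x ≤ y) : fInfty n f x ≤ fInfty n f y := by
  refine iInf_mono fun i => limsup_le_limsup ?_
  filter_upwards [eventually_update_mem hx i, eventually_update_mem hy i] with R hxR hyR
  exact EReal.coe_le_coe_iff.2
    (hf hxR hyR (update_le_update_iff.2 ⟨le_rfl, fun j _ => hxy j⟩))

theorem fInftyi_comp_perm {σ : Equiv.Perm (Fin n)} (hf : ∀ x ∈ Γ, f (x ∘ σ) = f x)
    (hx : x ∈ GammaInfty n Γ) (i : Fin n) :
    fInftyi n f i (x ∘ σ) = fInftyi n f (σ i) x := by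
  refine limsup_congr ?_
  filter_upwards [eventually_update_mem hx (σ i)] with R hR
  rw [← Function.update_comp_eq_of_injective x σ.injective, hf _ hR]

theorem fInfty_comp_perm {σ : Equiv.Perm (Fin n)} (hf : ∀ x ∈ Γ, f (x ∘ σ) = f x)
    (hx : x ∈ GammaInfty n Γ) : fInfty n f (x ∘ σ) = fInfty n f x :=
  (iInf_congr (fInftyi_comp_perm hf hx)).trans (σ.iInf_comp (g := fun i => fInftyi n f i x))

theorem fInftyi_concave (hf : ConcaveOn ℝ Γ f) (hmono : MonotoneOn f Γ)
    (hx : x ∈ GammaInfty n Γ) (hy : y ∈ GammaInfty n Γ) {a b : ℝ} (ha : 0 ≤ a) (hb : 0 ≤ b)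
    (hab : a + b = 1) (i : Fin n) :
    a * fInftyi n f i x + b * fInftyi n f i y ≤ fInftyi n f i (a • x + b • y) := by
  set u : ℝ → EReal := fun R => f (Function.update x i R)
  set v : ℝ → EReal := fun R => f (Function.update y i R)
  calc a * fInftyi n f i x + b * fInftyi n f i y
      = limsup (fun R => a * u R) atTop + liminf (fun R => b * v R) atTop := by
        rw [fInftyi_eq_liminf hmono hy,
          EReal.limsup_const_mul_of_nonneg_of_ne_top (EReal.coe_nonneg.2 ha) (EReal.coe_ne_top a),
          EReal.liminf_const_mul_of_nonneg_of_ne_top (EReal.coe_nonneg.2 hb) (EReal.coe_ne_top b)]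
        rfl
    _ ≤ limsup (fun R => a * u R + b * v R) atTop := EReal.le_limsup_add
    _ ≤ fInftyi n f i (a • x + b • y) := by
        refine limsup_le_limsup ?_
        filter_upwards [eventually_update_mem hx i, eventually_update_mem hy i] with R hxR hyR
        rw [update_smul_add_smul x y hab]
        simpa only [u, v, smul_eq_mul, EReal.coe_add, EReal.coe_mul] using
          EReal.coe_le_coe_iff.2 (hf.2 hxR hyR ha hb hab)

theorem fInfty_concave (hf : ConcaveOn ℝ Γ f) (hmono : MonotoneOn f Γ)
    (hx : x ∈ GammaInfty n Γ) (hy : y ∈ GammaInfty n Γ) {a b : ℝ} (ha : 0 ≤ a) (hb : 0 ≤ b)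
    (hab : a + b = 1) :
    a * fInfty n f x + b * fInfty n f y ≤ fInfty n f (a • x + b • y) := by
  refine le_iInf fun i => le_trans ?_ (fInftyi_concave hf hmono hx hy ha hb hab i)
  exact add_le_add
    (mul_le_mul_of_nonneg_left (iInf_le _ i) (EReal.coe_nonneg.2 ha))
    (mul_le_mul_of_nonneg_left (iInf_le _ i) (EReal.coe_nonneg.2 hb))

theorem concaveOn_toReal_fInfty (hf : ConcaveOn ℝ Γ f) (hmono : MonotoneOn f Γ)
    (hbot : ∀ x ∈ GammaInfty n Γ, fInfty n f x ≠ ⊥)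
    (htop : ∀ x ∈ GammaInfty n Γ, fInfty n f x ≠ ⊤) :
    ConcaveOn ℝ (GammaInfty n Γ) (fun x => (fInfty n f x).toReal) := by
  have hcoe : ∀ x ∈ GammaInfty n Γ, ((fInfty n f x).toReal : EReal) = fInfty n f x :=
    fun x hx => EReal.coe_toReal (htop x hx) (hbot x hx)
  have hconvex := convex_gammaInfty hf.1
  refine ⟨hconvex, fun x hx y hy a b ha hb hab => EReal.coe_le_coe_iff.1 ?_⟩
  rw [hcoe _ (hconvex hx hy ha hb hab), EReal.coe_add, smul_eq_mul, smul_eq_mul, EReal.coe_mul,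
    EReal.coe_mul, hcoe x hx, hcoe y hy]
  exact fInfty_concave hf hmono hx hy ha hb hab

end Infinity

theorem stmt_4_general {n : ℕ} {Γ : Set (Fin n → ℝ)} {f : (Fin n → ℝ) → ℝ}
    (hconc : ConcaveOn ℝ Γ f) (hmono : MonotoneOn f Γ) (hpos : ∀ x ∈ Γ, 0 < f x)
    (hperm : ∀ x ∈ Γ, ∀ σ : Equiv.Perm (Fin n), f (fun i => x (σ i)) = f x)
    (hfin : ∀ x ∈ GammaInfty n Γ, fInfty n f x ≠ ⊤) :
    ConcaveOn ℝ (GammaInfty n Γ) (fun x => (fInfty n f x).toReal) ∧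
    (∀ x ∈ GammaInfty n Γ, ∀ σ : Equiv.Perm (Fin n),
      fInfty n f (fun i => x (σ i)) = fInfty n f x) ∧
    (∀ x ∈ GammaInfty n Γ, ∀ y ∈ GammaInfty n Γ, (∀ i, x i ≤ y i) →
      (fInfty n f x).toReal ≤ (fInfty n f y).toReal) ∧
    (∀ x ∈ GammaInfty n Γ, 0 < (fInfty n f x).toReal) := by
  have hpos_infty : ∀ x ∈ GammaInfty n Γ, 0 < fInfty n f x :=
    fun x hx => fInfty_pos hmono hpos hx
  have hbot : ∀ x ∈ GammaInfty n Γ, fInfty n f x ≠ ⊥ :=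
    fun x hx => ne_bot_of_gt (hpos_infty x hx)
  exact ⟨concaveOn_toReal_fInfty hconc hmono hbot hfin,
    fun x hx σ => fInfty_comp_perm (fun z hz => hperm z hz σ) hx,
    fun x hx y hy hxy =>
      EReal.toReal_le_toReal (fInfty_mono hmono hx hy hxy) (hbot x hx) (hfin y hy),
    fun x hx => EReal.toReal_pos (hpos_infty x hx) (hfin x hx)⟩

theorem AssumptionA.monotoneOn {n : ℕ} {Γ : Set (Fin n → ℝ)} {f : (Fin n → ℝ) → ℝ}
    (hA : AssumptionA n Γ f) : MonotoneOn f Γ :=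
  monotoneOn_of_fderiv_single_nonneg hA.convex
    (fun x hx =>
      (hA.f_smooth.differentiableOn (by simp)).differentiableAt (hA.isOpen.mem_nhds hx))
    fun x hx i => (hA.f_deriv_pos x hx i).le

/-- Lemma 2.5 of the paper, second part: if `f_∞` is finite at every point of `Γ_∞`, then
`f_∞ : Γ_∞ → ℝ` is concave, symmetric, monotone nondecreasing in each variable, and strictly
positive on `Γ_∞`. -/
theorem stmt_4 (n : ℕ) (Γ : Set (Fin n → ℝ)) (f : (Fin n → ℝ) → ℝ)
    (hA : AssumptionA n Γ f)
    (hfin : ∀ x ∈ GammaInfty n Γ, fInfty n f x ≠ ⊤) :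
    ConcaveOn ℝ (GammaInfty n Γ) (fun x => (fInfty n f x).toReal) ∧
    (∀ x ∈ GammaInfty n Γ, ∀ σ : Equiv.Perm (Fin n),
      fInfty n f (fun i => x (σ i)) = fInfty n f x) ∧
    (∀ x ∈ GammaInfty n Γ, ∀ y ∈ GammaInfty n Γ, (∀ i, x i ≤ y i) →
      (fInfty n f x).toReal ≤ (fInfty n f y).toReal) ∧
    (∀ x ∈ GammaInfty n Γ, 0 < (fInfty n f x).toReal) :=
  stmt_4_general hA.f_concave hA.monotoneOn hA.f_pos hA.f_perm_invariant hfin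
end

section
/- Under Assumption (A), suppose f_∞ is finite at every point of Γ_∞. Then lim_{R→+∞} f_∞(Rλ) = +∞ for every λ ∈ Γ_∞; moreover the divergence is uniform on compact subsets: for every compact K ⊆ Γ_∞ and every B > 0 there exists R₁ > 0 such that f_∞(Rλ) ≥ B for all λ ∈ K and all R ≥ R₁. -/
open Filter

/-! Concavity and nonnegativity make `f` monotone along the directions of the cone `C`. Hence
`f (R • y) ≤ f (R • w)` for `y ∈ C`, `R > 0` and all `w ∈ z + closure C` with `z` close to `2 • y`,
and the left-hand side tends to infinity independently of `w`. If `x ∈ Γ_∞` and `x` with its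
`i`-th coordinate replaced by `R₀` is `2 • y` with `y ∈ Γ`, this applies to `w = (z₁, …, T, …, zₙ)`
for `z` near `x` and all `T ≥ R₀`, since enlarging one coordinate is a displacement in `closure Γ`.
Letting `T → +∞` gives the divergence of `f_∞` near `x`, and compactness makes it uniform.
-/

section ConvexCone

open scoped Topology Pointwise

variable {E : Type*} [AddCommGroup E] [Module ℝ E] {C : ConvexCone ℝ E} {f : E → ℝ}

theorem concaveOn_convexCone_le_add (hf : ConcaveOn ℝ C f) (hf₀ : ∀ x ∈ C, 0 ≤ f x) {a b : E}
    (ha : a ∈ C) (hb : b ∈ C) : f a ≤ f (a + b) := by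
  have scaled_le (s : ℝ) (hs : s ∈ Set.Ioo 0 1) : (1 - s) * f a ≤ f (a + b) := by
    have far_mem : a + s⁻¹ • b ∈ C := C.add_mem ha (C.smul_mem (inv_pos.2 hs.1) hb)
    calc (1 - s) * f a
        ≤ (1 - s) • f a + s • f (a + s⁻¹ • b) :=
          le_add_of_nonneg_right (mul_nonneg hs.1.le (hf₀ _ far_mem))
      _ ≤ f ((1 - s) • a + s • (a + s⁻¹ • b)) :=
          hf.2 ha far_mem (sub_nonneg.2 hs.2.le) hs.1.le (sub_add_cancel 1 s)
      _ = f (a + b) := by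
          rw [smul_add, smul_inv_smul₀ hs.1.ne', ← add_assoc, ← add_smul, sub_add_cancel, one_smul]
  have scaled_tendsto : Tendsto (fun s : ℝ => (1 - s) * f a) (𝓝[>] 0) (𝓝 (f a)) :=
    tendsto_nhdsWithin_of_tendsto_nhds <|
      Continuous.tendsto' (by fun_prop) 0 (f a) (by rw [sub_zero, one_mul])
  exact le_of_tendsto scaled_tendsto
    (eventually_of_mem (Ioo_mem_nhdsGT one_pos) scaled_le)

variable [TopologicalSpace E] [IsTopologicalAddGroup E]

theorem add_mem_convexCone_of_mem_closure (hC : IsOpen (C : Set E)) {a b : E} (ha : a ∈ C)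
    (hb : b ∈ closure (C : Set E)) : a + b ∈ C := by
  obtain ⟨a', ha', b', hb', hab⟩ : a + b ∈ (C : Set E) + (C : Set E) :=
    hC.add_closure (C : Set E) ▸ Set.add_mem_add ha hb
  exact hab ▸ C.add_mem ha' hb'

theorem eventually_le_apply_smul_of_sub_mem_closure (hC : IsOpen (C : Set E))
    (hf : ConcaveOn ℝ C f) (hf₀ : ∀ x ∈ C, 0 ≤ f x)
    (hf_top : ∀ x ∈ C, Tendsto (fun R : ℝ => f (R • x)) atTop atTop) {y : E} (hy : y ∈ C) (B : ℝ) :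
    ∀ᶠ p : ℝ × E in atTop ×ˢ 𝓝 y,
      ∀ w, w - p.2 ∈ closure (C : Set E) → B ≤ f (p.1 • w) := by
  set v : E := (2⁻¹ : ℝ) • y with v_def
  have hv : v ∈ C := C.smul_mem (by norm_num) hy
  have sub_v_mem : ∀ᶠ z in 𝓝 y, z - v ∈ C := by
    have y_sub_v : y - v = v := by rw [v_def]; module
    exact (continuous_sub_right v).tendsto' y v y_sub_v (hC.mem_nhds hv)
  have large : ∀ᶠ R : ℝ in atTop, 0 < R ∧ B ≤ f (R • v) :=
    (eventually_gt_atTop 0).and ((hf_top v hv).eventually_ge_atTop B)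
  filter_upwards [large.prod_mk sub_v_mem] with ⟨R, z⟩ ⟨⟨hR, hB⟩, hz⟩ w hw
  have w_sub_v_mem : w - v ∈ C := by
    have h := add_mem_convexCone_of_mem_closure hC hz hw
    rwa [add_comm, sub_add_sub_cancel] at h
  calc B ≤ f (R • v) := hB
    _ ≤ f (R • v + R • (w - v)) :=
      concaveOn_convexCone_le_add hf hf₀ (C.smul_mem hR hv) (C.smul_mem hR w_sub_v_mem)
    _ = f (R • w) := by rw [← smul_add, add_sub_cancel]

end ConvexCone

theorem nonneg_mem_closure_of_orthant_subset {ι : Type*} {s : Set (ι → ℝ)}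
    (hs : {x : ι → ℝ | ∀ i, 0 < x i} ⊆ s) {x : ι → ℝ} (hx : 0 ≤ x) : x ∈ closure s := by
  have orthant_eq : {x : ι → ℝ | ∀ i, 0 < x i} = Set.univ.pi fun _ => Set.Ioi 0 := by
    ext; simp
  refine closure_mono hs ?_
  rw [orthant_eq, closure_pi_set]
  intro i _
  rw [closure_Ioi]
  exact hx i

theorem map_update_smul_atTop {ι : Type*} [DecidableEq ι] (x : ι → ℝ) (i : ι) {R : ℝ}
    (hR : 0 < R) :
    map (Function.update (R • x) i) atTop = map (fun T : ℝ => R • Function.update x i T) atTop := by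
  have update_comp : (fun T : ℝ => R • Function.update x i T) =
      Function.update (R • x) i ∘ OrderIso.mulLeft₀ R hR :=
    funext fun T => (Function.update_smul R x i T).symm
  rw [update_comp, ← map_map, OrderIso.map_atTop]

section Infinity

open scoped Topology

variable {n : ℕ} {f : (Fin n → ℝ) → ℝ}

theorem mem_gammaInfty_iff {Γ : Set (Fin n → ℝ)} {x : Fin n → ℝ} :
    x ∈ GammaInfty n Γ ↔ ∀ i, ∀ᶠ T in atTop, Function.update x i T ∈ Γ := by
  simp only [GammaInfty, Set.mem_ofPred_eq, eventually_atTop]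

theorem fInftyi_smul (f : (Fin n → ℝ) → ℝ) (i : Fin n) (x : Fin n → ℝ) {R : ℝ} (hR : 0 < R) :
    fInftyi n f i (R • x) = fInftyi n (fun w => f (R • w)) i x := by
  have limsup_map := congrArg (limsup fun w => (f w : EReal)) (map_update_smul_atTop x i hR)
  rwa [← limsup_comp, ← limsup_comp] at limsup_map

theorem le_fInftyi_of_eventually_le {i : Fin n} {x : Fin n → ℝ} {B : ℝ}
    (h : ∀ᶠ T in atTop, B ≤ f (Function.update x i T)) : (B : EReal) ≤ fInftyi n f i x :=
  le_limsup_of_frequently_le' (h.mono fun _ => EReal.coe_le_coe).frequently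

variable {Γ : ConvexCone ℝ (Fin n → ℝ)}

theorem smul_mem_gammaInfty {x : Fin n → ℝ} (hx : x ∈ GammaInfty n Γ) {R : ℝ} (hR : 0 < R) :
    R • x ∈ GammaInfty n Γ := by
  rw [mem_gammaInfty_iff] at hx ⊢
  intro i
  change (Γ : Set (Fin n → ℝ)) ∈ map (Function.update (R • x) i) atTop
  rw [map_update_smul_atTop x i hR]
  exact (hx i).mono fun T hT => Γ.smul_mem hR hT

theorem eventually_le_fInftyi_smul (hΓ : IsOpen (Γ : Set (Fin n → ℝ)))
    (h_orthant : {x : Fin n → ℝ | ∀ i, 0 < x i} ⊆ Γ)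
    (hf : ConcaveOn ℝ Γ f) (hf₀ : ∀ x ∈ Γ, 0 ≤ f x)
    (hf_top : ∀ x ∈ Γ, Tendsto (fun R : ℝ => f (R • x)) atTop atTop)
    {x : Fin n → ℝ} (hx : x ∈ GammaInfty n Γ) (B : ℝ) (i : Fin n) :
    ∀ᶠ p : ℝ × (Fin n → ℝ) in atTop ×ˢ 𝓝 x, (B : EReal) ≤ fInftyi n f i (p.1 • p.2) := by
  obtain ⟨R₀, hR₀⟩ := (mem_gammaInfty_iff.1 hx i).exists
  have update_tendsto : Tendsto (fun z : Fin n → ℝ => Function.update z i R₀) (𝓝 x)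
      (𝓝 (Function.update x i R₀)) := Continuous.tendsto (by fun_prop) x
  have le_of_sub_mem := (tendsto_id.prodMap update_tendsto).eventually
    (eventually_le_apply_smul_of_sub_mem_closure hΓ hf hf₀ hf_top hR₀ B)
  filter_upwards [le_of_sub_mem, tendsto_fst.eventually (eventually_gt_atTop 0)] with ⟨R, z⟩ hz hR
  rw [fInftyi_smul f i z hR]
  refine le_fInftyi_of_eventually_le ?_
  filter_upwards [eventually_ge_atTop R₀] with T hT
  exact hz _ <| nonneg_mem_closure_of_orthant_subset h_orthant <|
    sub_nonneg.2 (update_le_update_iff'.2 hT)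

theorem eventually_forall_le_fInfty_smul_of_isCompact (hΓ : IsOpen (Γ : Set (Fin n → ℝ)))
    (h_orthant : {x : Fin n → ℝ | ∀ i, 0 < x i} ⊆ Γ)
    (hf : ConcaveOn ℝ Γ f) (hf₀ : ∀ x ∈ Γ, 0 ≤ f x)
    (hf_top : ∀ x ∈ Γ, Tendsto (fun R : ℝ => f (R • x)) atTop atTop)
    {K : Set (Fin n → ℝ)} (hK : IsCompact K) (hKΓ : K ⊆ GammaInfty n Γ) (B : ℝ) :
    ∀ᶠ R : ℝ in atTop, ∀ x ∈ K, (B : EReal) ≤ fInfty n f (R • x) := by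
  have locally_le (x : Fin n → ℝ) (hx : x ∈ K) :
      ∀ᶠ p : ℝ × (Fin n → ℝ) in atTop ×ˢ 𝓝 x, (B : EReal) ≤ fInfty n f (p.1 • p.2) :=
    (eventually_all.2 (eventually_le_fInftyi_smul hΓ h_orthant hf hf₀ hf_top (hKΓ hx) B)).mono
      fun _ => le_iInf
  have le_near_K : ∀ᶠ p : ℝ × (Fin n → ℝ) in atTop ×ˢ 𝓝ˢ K,
      (B : EReal) ≤ fInfty n f (p.1 • p.2) := hK.mem_prod_nhdsSet_of_forall locally_le
  exact eventually_prod_principal_iff.1 <|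
    le_near_K.filter_mono (prod_mono_right atTop principal_le_nhdsSet)

end Infinity

theorem stmt_7_general (n : ℕ) (Γ : ConvexCone ℝ (Fin n → ℝ)) (f : (Fin n → ℝ) → ℝ)
    (hΓ : IsOpen (Γ : Set (Fin n → ℝ))) (h_orthant : {x : Fin n → ℝ | ∀ i, 0 < x i} ⊆ Γ)
    (hf : ConcaveOn ℝ Γ f) (hf₀ : ∀ x ∈ Γ, 0 ≤ f x)
    (hf_top : ∀ x ∈ Γ, Tendsto (fun R : ℝ => f (R • x)) atTop atTop)
    (hfin : ∀ x ∈ GammaInfty n Γ, fInfty n f x ≠ ⊤) :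
    (∀ x ∈ GammaInfty n Γ,
      Tendsto (fun R : ℝ => (fInfty n f (R • x)).toReal) atTop atTop) ∧
    (∀ K ⊆ GammaInfty n Γ, IsCompact K → ∀ B : ℝ, 0 < B →
      ∃ R₁ : ℝ, 0 < R₁ ∧ ∀ x ∈ K, ∀ R : ℝ, R₁ ≤ R →
        B ≤ (fInfty n f (R • x)).toReal) := by
  have uniform {K : Set (Fin n → ℝ)} (hK : IsCompact K) (hKΓ : K ⊆ GammaInfty n Γ) (B : ℝ) :
      ∀ᶠ R : ℝ in atTop, 0 < R ∧ ∀ x ∈ K, B ≤ (fInfty n f (R • x)).toReal := by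
    filter_upwards [eventually_gt_atTop 0, eventually_forall_le_fInfty_smul_of_isCompact
      hΓ h_orthant hf hf₀ hf_top hK hKΓ B] with R hR hB
    refine ⟨hR, fun x hx => EReal.coe_le_coe_iff.1 ((hB x hx).trans ?_)⟩
    exact EReal.le_coe_toReal (hfin _ (smul_mem_gammaInfty (hKΓ hx) hR))
  constructor
  · intro x hx
    refine tendsto_atTop.2 fun B => ?_
    filter_upwards [uniform isCompact_singleton (Set.singleton_subset_iff.2 hx) B] with R hR
    exact hR.2 x rfl
  · intro K hKΓ hK B _
    obtain ⟨R₁, hR₁⟩ := eventually_atTop.1 (uniform hK hKΓ B)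
    exact ⟨R₁, (hR₁ R₁ le_rfl).1, fun x hx R hR => (hR₁ R hR).2 x hx⟩

/-- The cone `Γ` of Assumption (A) as a bundled `ConvexCone`, whose underlying set is `Γ` by
definition. -/
def AssumptionA.toConvexCone {n : ℕ} {Γ : Set (Fin n → ℝ)} {f : (Fin n → ℝ) → ℝ}
    (hA : AssumptionA n Γ f) : ConvexCone ℝ (Fin n → ℝ) where
  carrier := Γ
  smul_mem' t ht x hx := hA.cone x hx t ht
  add_mem' x hx y hy := by
    have midpoint_mem := hA.convex.midpoint_mem hx hy
    rw [← midpoint_add_self ℝ x y, ← two_smul ℝ]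
    exact hA.cone _ midpoint_mem 2 two_pos

/-- Lemma 2.7 of the paper: if `f_∞` is finite on `Γ_∞`, then `f_∞(Rλ) → +∞` as `R → +∞` for
every `λ ∈ Γ_∞`, uniformly on compact subsets of `Γ_∞`. -/
theorem stmt_7 (n : ℕ) (Γ : Set (Fin n → ℝ)) (f : (Fin n → ℝ) → ℝ)
    (hA : AssumptionA n Γ f)
    (hfin : ∀ x ∈ GammaInfty n Γ, fInfty n f x ≠ ⊤) :
    (∀ x ∈ GammaInfty n Γ,
      Tendsto (fun R : ℝ => (fInfty n f (R • x)).toReal) atTop atTop) ∧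
    (∀ K ⊆ GammaInfty n Γ, IsCompact K → ∀ B : ℝ, 0 < B →
      ∃ R₁ : ℝ, 0 < R₁ ∧ ∀ x ∈ K, ∀ R : ℝ, R₁ ≤ R →
        B ≤ (fInfty n f (R • x)).toReal) :=
  stmt_7_general n hA.toConvexCone f hA.isOpen hA.orthant_subset hA.f_concave
    (fun x hx => (hA.f_pos x hx).le) hA.f_proper hfin
end

section
/- Let C ⊆ ℝⁿ be a convex cone, invariant under permutations of the coordinates, containing the open positive orthant Γₙ = {λ ∈ ℝⁿ : λᵢ > 0 for all i}. If C contains a point λ₀ with Σᵢ (λ₀)ᵢ < 0, then C = ℝⁿ. -/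
/-!
Summing the permuted copies of `x₀` over a transitive group gives a point of the cone whose
coordinates are all equal, since moving from one coordinate to another only reindexes the sum over
the group. Their common value has the sign of `∑ i, x₀ i`, so this point is strictly negative.
Subtracting a large multiple of it moves any given `y` into the positive orthant, and adding the
multiple back stays in the cone.
-/

open Filter

section TransitiveAction

variable {G ι M : Type*} [Group G] [Fintype G] [MulAction G ι] [MulAction.IsPretransitive G ι]

theorem sum_smul_eq_sum_smul [AddCommMonoid M] (f : ι → M) (i j : ι) :
    ∑ g : G, f (g • i) = ∑ g : G, f (g • j) := by
  obtain ⟨h, rfl⟩ := MulAction.exists_smul_eq G j i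
  simpa only [Equiv.coe_mulRight, mul_smul] using
    Equiv.sum_comp (Equiv.mulRight h) fun g : G => f (g • j)

variable [Fintype ι]

theorem card_nsmul_sum_smul [AddCommMonoid M] (f : ι → M) (i : ι) :
    Fintype.card ι • ∑ g : G, f (g • i) = Fintype.card G • ∑ j, f j :=
  calc
    Fintype.card ι • ∑ g : G, f (g • i) = ∑ j, ∑ g : G, f (g • j) := by
      simp only [sum_smul_eq_sum_smul f _ i, Finset.sum_const, Finset.card_univ]
    _ = ∑ g : G, ∑ j, f (g • j) := Finset.sum_comm
    _ = ∑ _g : G, ∑ j, f j :=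
      Fintype.sum_congr _ _ fun g => Equiv.sum_comp (MulAction.toPerm g) f
    _ = Fintype.card G • ∑ j, f j := by rw [Finset.sum_const, Finset.card_univ]

theorem sum_smul_neg_of_sum_neg [AddCommMonoid M] [LinearOrder M] [IsOrderedAddMonoid M]
    {f : ι → M} (hf : ∑ j, f j < 0) (i : ι) : ∑ g : G, f (g • i) < 0 := by
  have : Nonempty ι := ⟨i⟩
  rw [← nsmul_neg_iff (Fintype.card_ne_zero (α := ι)), card_nsmul_sum_smul]
  exact (nsmul_neg_iff Fintype.card_ne_zero).2 hf

end TransitiveAction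

section ConvexCone

variable {𝕜 ι : Type*} [Field 𝕜] [LinearOrder 𝕜] [IsStrictOrderedRing 𝕜]

theorem exists_pos_forall_mul_lt_of_neg [Finite ι] {s : ι → 𝕜} (hs : ∀ i, s i < 0) (y : ι → 𝕜) :
    ∃ t : 𝕜, 0 < t ∧ ∀ i, t * s i < y i := by
  have h_lt : ∀ᶠ t : 𝕜 in atTop, ∀ i, t * s i < y i :=
    eventually_all.2 fun i => (tendsto_id.atTop_mul_const_of_neg (hs i)).eventually_lt_atBot (y i)
  exact ((eventually_gt_atTop 0).and h_lt).exists

theorem convexCone_eq_top_of_forall_neg [Finite ι] {C : ConvexCone 𝕜 (ι → 𝕜)}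
    (hpos : ∀ x : ι → 𝕜, (∀ i, 0 < x i) → x ∈ C) {s : ι → 𝕜} (hsC : s ∈ C)
    (hs : ∀ i, s i < 0) : C = ⊤ := by
  refine SetLike.coe_injective (Set.eq_univ_of_forall fun y => ?_)
  obtain ⟨t, ht, hty⟩ := exists_pos_forall_mul_lt_of_neg hs y
  have hdiff : y - t • s ∈ C := hpos _ fun i => sub_pos.2 (hty i)
  exact sub_add_cancel y (t • s) ▸ C.add_mem hdiff (C.smul_mem ht hsC)

theorem stmt_10_general [Fintype ι] (G : Subgroup (Equiv.Perm ι)) [MulAction.IsPretransitive G ι]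
    (C : ConvexCone 𝕜 (ι → 𝕜)) (hpos : ∀ x : ι → 𝕜, (∀ i, 0 < x i) → x ∈ C)
    (x₀ : ι → 𝕜) (hx₀ : ∀ σ ∈ G, (fun i => x₀ (σ i)) ∈ C) (hsum : ∑ i, x₀ i < 0) :
    C = ⊤ := by
  classical
  have := Fintype.ofFinite G
  have hmem : ∑ σ : G, (fun i => x₀ (σ • i)) ∈ C :=
    Finset.sum_induction_nonempty _ (· ∈ C) (fun _ _ hx hy => C.add_mem hx hy) Finset.univ_nonempty
      fun σ _ => hx₀ σ σ.2
  refine convexCone_eq_top_of_forall_neg hpos hmem fun i => ?_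
  rw [Finset.sum_apply]
  exact sum_smul_neg_of_sum_neg hsum i

theorem convexCone_coe_hull_eq_self {E : Type*} [AddCommGroup E] [Module 𝕜 E] {s : Set E}
    (hs : Convex 𝕜 s) (hsmul : ∀ x ∈ s, ∀ t : 𝕜, 0 < t → t • x ∈ s) :
    (ConvexCone.hull 𝕜 s : Set E) = s := by
  refine Set.Subset.antisymm (fun x hx => ?_) ConvexCone.subset_hull
  obtain ⟨t, ht, y, hy, rfl⟩ := (ConvexCone.mem_hull_of_convex hs).1 hx
  exact hsmul y hy t ht

end ConvexCone

/-- If a convex cone `C ⊆ ℝⁿ`, invariant under permutations of the coordinates and containing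
the open positive orthant, contains a point whose coordinate sum is negative, then `C = ℝⁿ`. -/
theorem stmt_10 (n : ℕ) (C : Set (Fin n → ℝ))
    (hconv : Convex ℝ C)
    (hcone : ∀ x ∈ C, ∀ t : ℝ, 0 < t → t • x ∈ C)
    (hperm : ∀ x ∈ C, ∀ σ : Equiv.Perm (Fin n), (fun i => x (σ i)) ∈ C)
    (horthant : {x : Fin n → ℝ | ∀ i, 0 < x i} ⊆ C)
    (x₀ : Fin n → ℝ) (hx₀ : x₀ ∈ C) (hsum : ∑ i, x₀ i < 0) :
    C = Set.univ := by
  have : MulAction.IsPretransitive (⊤ : Subgroup (Equiv.Perm (Fin n))) (Fin n) :=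
    ⟨fun i j => ⟨⟨Equiv.swap i j, Subgroup.mem_top _⟩, Equiv.swap_apply_left i j⟩⟩
  have hull_eq_top : ConvexCone.hull ℝ C = ⊤ :=
    stmt_10_general ⊤ _ (fun _ hx => ConvexCone.subset_hull (horthant hx)) x₀
      (fun σ _ => ConvexCone.subset_hull (hperm x₀ hx₀ σ)) hsum
  rw [← convexCone_coe_hull_eq_self hconv hcone, hull_eq_top, ConvexCone.coe_top]
end

section
/- Under Assumption (A), exactly one of the following two statements holds: (1) for every i ∈ {1,…,n}, the ray {t·eᵢ : t ≥ 0} (where eᵢ is the i-th standard basis vector) is contained in the topological boundary ∂Γ_∞; (2) Γ_∞ = ℝⁿ. -/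
open Filter

/-!
Adding `ε • (1, …, 1)` to a point with nonnegative coordinates gives a point of the positive
orthant, which lies in `Γ_∞`; so each ray lies in the closure of `Γ_∞`, and the question is whether
some `t • eᵢ` is interior. If it is, then `t • eᵢ - ε • (1, …, 1) ∈ Γ_∞` for some `ε > 0`, so `Γ`
contains a vector with `i`-th coordinate `r` and all others `-ε`. By symmetry `r` may be moved to
any position `j`. Given any `y`, a large multiple of that vector lies strictly below `y` once the
`j`-th coordinate of `y` is replaced by a large `R`. Since `Γ` is closed under adding vectors of the
positive orthant, this shows `y ∈ Γ_∞`.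
-/

open Function (update const)
open Set Topology

theorem strongLT_update_iff {ι α : Type*} [DecidableEq ι] [LT α] {x y : ι → α} {i : ι} {r : α} :
    StrongLT x (update y i r) ↔ x i < r ∧ ∀ k ≠ i, x k < y k :=
  Function.forall_update_iff y fun k b => x k < b

theorem update_const_mem_of_comp_perm_mem {ι α : Type*} [DecidableEq ι] {s : Set (ι → α)}
    (hperm : ∀ x ∈ s, ∀ σ : Equiv.Perm ι, x ∘ σ ∈ s) {c r : α} {i : ι}
    (h : update (const ι c) i r ∈ s) (j : ι) : update (const ι c) j r ∈ s := by
  simpa only [Function.update_comp_equiv, Equiv.symm_swap, Equiv.swap_apply_left,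
    Function.const_comp] using hperm _ h (Equiv.swap i j)

/-- The points of `ι → α` that end up in `Γ` for good when any single one of their coordinates is
sent to infinity: the paper's `Γ_∞` for an arbitrary index type and arbitrary ordered scalars. -/
def coordAsymptotic {ι α : Type*} [DecidableEq ι] [Preorder α] (Γ : Set (ι → α)) : Set (ι → α) :=
  {x | ∀ i, ∀ᶠ R in atTop, update x i R ∈ Γ}

theorem GammaInfty_eq_coordAsymptotic (n : ℕ) (Γ : Set (Fin n → ℝ)) :
    GammaInfty n Γ = coordAsymptotic Γ := by
  simp only [GammaInfty, coordAsymptotic, eventually_atTop]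

theorem setOf_strongLT_subset_coordAsymptotic {ι α : Type*} [DecidableEq ι] [Preorder α]
    [IsDirectedOrder α] [NoMaxOrder α] {Γ : Set (ι → α)} {a : ι → α} (ha : {x | StrongLT a x} ⊆ Γ) :
    {x | StrongLT a x} ⊆ coordAsymptotic Γ := fun _ hx i =>
  (eventually_gt_atTop (a i)).mono fun _ hR => ha (strongLT_update_iff.2 ⟨hR, fun k _ => hx k⟩)

theorem tendsto_add_const_nhds_zero {ι α : Type*} [TopologicalSpace α] [AddZeroClass α]
    [ContinuousAdd α] (x : ι → α) : Tendsto (fun c : α => x + const ι c) (𝓝 0) (𝓝 x) := by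
  have hcont : Continuous fun c : α => x + const ι c := by
    unfold const
    fun_prop
  simpa only [Function.const_zero, add_zero] using hcont.tendsto 0

section OrderedAddCommGroup

variable {ι α : Type*} [DecidableEq ι] [AddCommGroup α] [LinearOrder α] [IsOrderedAddMonoid α]
  [DenselyOrdered α] [Nontrivial α] [TopologicalSpace α] [OrderTopology α] {Γ : Set (ι → α)}

theorem mem_closure_coordAsymptotic_of_nonneg (hpos : {x | StrongLT 0 x} ⊆ Γ) {x : ι → α}
    (hx : 0 ≤ x) : x ∈ closure (coordAsymptotic Γ) := by
  have htendsto : Tendsto (fun ε : α => x + const ι ε) (𝓝[>] 0) (𝓝 x) :=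
    (tendsto_add_const_nhds_zero x).mono_left nhdsWithin_le_nhds
  refine mem_closure_of_tendsto htendsto (eventually_mem_nhdsWithin.mono fun ε hε => ?_)
  exact setOf_strongLT_subset_coordAsymptotic hpos fun k => add_pos_of_nonneg_of_pos (hx k) hε

theorem exists_update_const_mem_of_single_mem_interior {i : ι} {t : α}
    (h : Pi.single i t ∈ interior (coordAsymptotic Γ)) :
    ∃ c < 0, ∃ r, update (const ι c) i r ∈ Γ := by
  have hnear : ∀ᶠ c in 𝓝[<] (0 : α), Pi.single i t + const ι c ∈ coordAsymptotic Γ :=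
    ((tendsto_add_const_nhds_zero _).mono_left nhdsWithin_le_nhds).eventually_mem
      (mem_interior_iff_mem_nhds.1 h)
  obtain ⟨c, hmem, hc⟩ := (hnear.and eventually_mem_nhdsWithin).exists
  obtain ⟨r, hr⟩ := (hmem i).exists
  have hupdate : update (Pi.single i t + const ι c) i r = update (const ι c) i r :=
    Function.update_eq_iff.2 ⟨by rw [Function.update_self], fun k hk => by
      rw [Function.update_of_ne hk, Pi.add_apply, Pi.single_eq_of_ne hk, zero_add]⟩
  exact ⟨c, hc, r, hupdate ▸ hr⟩

end OrderedAddCommGroup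

theorem mem_convexCone_of_strongLT {ι R : Type*} [Ring R] [PartialOrder R] [IsOrderedAddMonoid R]
    {Γ : ConvexCone R (ι → R)} (hpos : {x | StrongLT 0 x} ⊆ (Γ : Set (ι → R))) {x y : ι → R}
    (hx : x ∈ Γ) (hxy : StrongLT x y) : y ∈ Γ := by
  have hsub : y - x ∈ Γ := hpos fun k => sub_pos.2 (hxy k)
  simpa only [add_sub_cancel] using Γ.add_mem hx hsub

section OrderedField

variable {ι 𝕜 : Type*} [Finite ι] [Field 𝕜] [LinearOrder 𝕜] [IsStrictOrderedRing 𝕜]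

theorem exists_pos_smul_const_strongLT (y : ι → 𝕜) {c : 𝕜} (hc : c < 0) :
    ∃ s : 𝕜, 0 < s ∧ StrongLT (s • const ι c) y := by
  have hlt : ∀ᶠ s : 𝕜 in atTop, ∀ k, s * c < y k := eventually_all.2 fun k =>
    (eventually_gt_atTop (y k / c)).mono fun s hs => (div_lt_iff_of_neg hc).1 hs
  exact ((eventually_gt_atTop 0).and hlt).exists

variable [DecidableEq ι]

theorem coordAsymptotic_eq_univ_of_update_const_mem {Γ : ConvexCone 𝕜 (ι → 𝕜)}
    (hperm : ∀ x ∈ Γ, ∀ σ : Equiv.Perm ι, x ∘ σ ∈ Γ)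
    (hpos : {x | StrongLT 0 x} ⊆ (Γ : Set (ι → 𝕜))) {c r : 𝕜} (hc : c < 0) {i : ι}
    (h : update (const ι c) i r ∈ Γ) : coordAsymptotic (Γ : Set (ι → 𝕜)) = univ := by
  refine eq_univ_of_forall fun y j => ?_
  have hmem : update (const ι c) j r ∈ Γ :=
    update_const_mem_of_comp_perm_mem (s := (Γ : Set (ι → 𝕜))) hperm h j
  obtain ⟨s, hs, hsy⟩ := exists_pos_smul_const_strongLT y hc
  filter_upwards [eventually_gt_atTop (s * r)] with R hR
  have hlt : StrongLT (s • update (const ι c) j r) (update y j R) := by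
    refine strongLT_update_iff.2 ⟨?_, fun k hk => ?_⟩
    · simpa only [Pi.smul_apply, Function.update_self, smul_eq_mul] using hR
    · simpa only [Pi.smul_apply, Function.update_of_ne hk] using hsy k
  exact mem_convexCone_of_strongLT hpos (Γ.smul_mem hs hmem) hlt

theorem stmt_11_general [Nonempty ι] [TopologicalSpace 𝕜] [OrderTopology 𝕜]
    (Γ : ConvexCone 𝕜 (ι → 𝕜)) (hperm : ∀ x ∈ Γ, ∀ σ : Equiv.Perm ι, x ∘ σ ∈ Γ)
    (hpos : {x | StrongLT 0 x} ⊆ (Γ : Set (ι → 𝕜))) :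
    Xor
      (∀ i : ι, ∀ t : 𝕜, 0 ≤ t →
        Pi.single i t ∈ frontier (coordAsymptotic (Γ : Set (ι → 𝕜))))
      (coordAsymptotic (Γ : Set (ι → 𝕜)) = univ) := by
  refine xor_iff_iff_not.2 ⟨fun hfrontier huniv => ?_, fun hne i t ht => ⟨?_, fun hint => hne ?_⟩⟩
  · simpa only [huniv, frontier_univ, mem_empty_iff_false]
      using hfrontier (Classical.arbitrary ι) 0 le_rfl
  · exact mem_closure_coordAsymptotic_of_nonneg hpos (Pi.single_nonneg.2 ht)
  · obtain ⟨c, hc, r, hmem⟩ := exists_update_const_mem_of_single_mem_interior hint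
    exact coordAsymptotic_eq_univ_of_update_const_mem hperm hpos hc hmem

end OrderedField

namespace AssumptionA

variable {n : ℕ} {Γ : Set (Fin n → ℝ)} {f : (Fin n → ℝ) → ℝ}

/-- The cone `Γ` of Assumption (A) as a bundled convex cone, with carrier definitionally `Γ`. -/
def toConvexCone_s11 (hA : AssumptionA n Γ f) : ConvexCone ℝ (Fin n → ℝ) where
  carrier := Γ
  smul_mem' c hc x hx := hA.cone x hx c hc
  add_mem' x hx y hy := by
    have hmid : midpoint ℝ x y ∈ Γ := hA.convex.midpoint_mem hx hy
    simpa only [midpoint_eq_smul_add, smul_invOf_smul] using hA.cone _ hmid 2 two_pos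

theorem nonempty_index (hA : AssumptionA n Γ f) : Nonempty (Fin n) := by
  refine not_isEmpty_iff.1 fun hempty => ?_
  have hsum : 0 < ∑ i, (0 : Fin n → ℝ) i := hA.subset_halfspace (hA.orthant_subset isEmptyElim)
  simp only [Pi.zero_apply, Finset.sum_const_zero, lt_self_iff_false] at hsum

end AssumptionA

/-- Lemma 2.10 of the paper: exactly one of the following holds: (1) for every `i`, the ray
`{t·eᵢ : t ≥ 0}` is contained in the topological boundary of `Γ_∞`; (2) `Γ_∞ = ℝⁿ`. -/
theorem stmt_11 (n : ℕ) (Γ : Set (Fin n → ℝ)) (f : (Fin n → ℝ) → ℝ)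
    (hA : AssumptionA n Γ f) :
    Xor'
      (∀ i : Fin n, ∀ t : ℝ, 0 ≤ t →
        (Pi.single i t : Fin n → ℝ) ∈ frontier (GammaInfty n Γ))
      (GammaInfty n Γ = Set.univ) := by
  have := hA.nonempty_index
  rw [GammaInfty_eq_coordAsymptotic]
  exact stmt_11_general hA.toConvexCone_s11 hA.perm_invariant hA.orthant_subset
end

section
/- Under Assumption (A), suppose Γ_∞ ≠ ℝⁿ. Then for every k ∈ {1,…,n}, Γ_∞ ⊆ {λ ∈ ℝⁿ : Σ_{i≠k} λᵢ > 0}. -/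
open Filter

/-!
Suppose `x ∈ Γ_∞` has nonpositive sum off the `k`-th coordinate. A large `k`-th coordinate moves `x`
into `Γ` without changing that sum. Adding up its images under the powers of a permutation that
fixes `k` and cycles the other indices makes the other coordinates all equal to that sum, and
openness of `Γ` makes them negative. By symmetry `Γ` contains, for each `i`, a vector `w` negative
off `i`; large multiples of `w` lie below any prescribed vector off `i`, so adding positive vectors
shows that `Γ_∞` is everything.
-/

theorem sum_range_pow_apply_of_isCycleOn {ι M : Type*} [AddCommMonoid M] {s : Finset ι}
    {σ : Equiv.Perm ι} (hσ : σ.IsCycleOn s) (x : ι → M) {i : ι} (hi : i ∈ s) :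
    ∑ m ∈ Finset.range s.card, x ((σ ^ m) i) = ∑ j ∈ s, x j := by
  refine Finset.sum_nbij (fun m => (σ ^ m) i) ?mapsTo ?injOn ?surjOn fun _ _ => rfl
  case mapsTo =>
    intro m _
    exact (hσ.1.perm_pow m).mapsTo hi
  case injOn =>
    intro m hm l hl hml
    exact ((hσ.pow_apply_eq_pow_apply hi).mp hml).eq_of_lt_of_lt
      (Finset.mem_range.mp hm) (Finset.mem_range.mp hl)
  case surjOn =>
    intro j hj
    obtain ⟨m, hm, hmj⟩ := hσ.exists_pow_eq hi hj
    exact ⟨m, Finset.mem_coe.mpr (Finset.mem_range.mpr hm), hmj⟩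

theorem exists_mem_forall_eq_sum_of_perm_invariant {ι M : Type*} [AddCommMonoid M]
    {S : Set (ι → M)} (hadd : ∀ x ∈ S, ∀ y ∈ S, x + y ∈ S)
    (hperm : ∀ x ∈ S, ∀ σ : Equiv.Perm ι, x ∘ σ ∈ S) {x : ι → M} (hx : x ∈ S) (s : Finset ι) :
    ∃ y ∈ S, ∀ i ∈ s, y i = ∑ j ∈ s, x j := by
  rcases s.eq_empty_or_nonempty with rfl | hs
  · exact ⟨x, hx, by simp⟩
  obtain ⟨σ, hσ, -⟩ := s.countable_toSet.exists_cycleOn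
  refine ⟨∑ m ∈ Finset.range s.card, x ∘ ⇑(σ ^ m), ?_, fun i hi => ?_⟩
  · exact Finset.sum_induction_nonempty _ (· ∈ S) (fun a b ha hb => hadd a ha b hb)
      (Finset.nonempty_range_iff.mpr hs.card_ne_zero) fun m _ => hperm x hx (σ ^ m)
  · simpa only [Finset.sum_apply, Function.comp_apply]
      using sum_range_pow_apply_of_isCycleOn hσ x hi

/-- The set `Γ_∞` of `GammaInfty`, for vectors with any index type and any ordered scalars; the
sufficiently large values `R` are those of the filter `atTop`. -/
def atInfinity {ι 𝕜 : Type*} [DecidableEq ι] [Preorder 𝕜] (Γ : Set (ι → 𝕜)) : Set (ι → 𝕜) :=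
  {x | ∀ i, ∀ᶠ R in atTop, Function.update x i R ∈ Γ}

theorem gammaInfty_eq_atInfinity {n : ℕ} (Γ : Set (Fin n → ℝ)) :
    GammaInfty n Γ = atInfinity Γ := by
  simp only [GammaInfty, atInfinity, eventually_atTop]

section OrderedField

variable {ι 𝕜 : Type*} [Field 𝕜] [LinearOrder 𝕜] [IsStrictOrderedRing 𝕜]

theorem exists_mem_forall_lt_of_isOpen [TopologicalSpace 𝕜] [OrderTopology 𝕜] {U : Set (ι → 𝕜)}
    (hU : IsOpen U) {y : ι → 𝕜} (hy : y ∈ U) : ∃ z ∈ U, ∀ i, z i < y i := by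
  have hcont : Continuous fun (ε : 𝕜) (i : ι) => y i - ε := by fun_prop
  have hmem : ∀ᶠ ε in nhds (0 : 𝕜), (fun i => y i - ε) ∈ U :=
    hcont.continuousAt.eventually_mem (hU.mem_nhds (by simpa only [sub_zero] using hy))
  obtain ⟨ε, hε, hε_pos⟩ :=
    ((hmem.filter_mono nhdsWithin_le_nhds).and (self_mem_nhdsWithin (s := Set.Ioi 0))).exists
  exact ⟨fun i => y i - ε, hε, fun i => sub_lt_self _ hε_pos⟩

variable {C : ConvexCone 𝕜 (ι → 𝕜)}

theorem mem_convexCone_of_forall_lt (hpos : {x : ι → 𝕜 | ∀ i, 0 < x i} ⊆ C) {x y : ι → 𝕜}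
    (hx : x ∈ C) (hxy : ∀ i, x i < y i) : y ∈ C := by
  have hsub : y - x ∈ C := hpos fun i => sub_pos.mpr (hxy i)
  simpa only [add_sub_cancel] using C.add_mem hx hsub

theorem eventually_forall_ne_mul_lt [Finite ι] {w : ι → 𝕜} {i : ι} (hw : ∀ j ≠ i, w j < 0)
    (v : ι → 𝕜) : ∀ᶠ t in atTop, ∀ j ≠ i, t * w j < v j := by
  refine eventually_all.mpr fun j => eventually_imp_distrib_left.mpr fun hj => ?_
  exact (tendsto_id.atTop_mul_const_of_neg (hw j hj)).eventually_lt_atBot (v j)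

variable [DecidableEq ι]

theorem eventually_update_mem_convexCone [Finite ι] (hpos : {x : ι → 𝕜 | ∀ i, 0 < x i} ⊆ C)
    {w : ι → 𝕜} (hwC : w ∈ C) {i : ι} (hw : ∀ j ≠ i, w j < 0) (v : ι → 𝕜) :
    ∀ᶠ R in atTop, Function.update v i R ∈ C := by
  obtain ⟨t, hlt, ht⟩ :=
    ((eventually_forall_ne_mul_lt hw v).and (eventually_gt_atTop 0)).exists
  filter_upwards [eventually_gt_atTop (t * w i)] with R hR
  refine mem_convexCone_of_forall_lt hpos (C.smul_mem ht hwC) ?_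
  exact (Function.forall_update_iff v fun j r => t * w j < r).mpr ⟨hR, hlt⟩

theorem atInfinity_eq_univ_of_forall_ne_neg [Finite ι] (hpos : {x : ι → 𝕜 | ∀ i, 0 < x i} ⊆ C)
    (hperm : ∀ x ∈ C, ∀ σ : Equiv.Perm ι, x ∘ σ ∈ C) {w : ι → 𝕜} (hwC : w ∈ C) {k : ι}
    (hw : ∀ j ≠ k, w j < 0) : atInfinity (C : Set (ι → 𝕜)) = Set.univ := by
  refine Set.eq_univ_of_forall fun v i => ?_
  refine eventually_update_mem_convexCone hpos (hperm w hwC (Equiv.swap i k)) (fun j hj => ?_) v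
  exact hw _ (Equiv.swap_apply_eq_iff.not.mpr (by rwa [Equiv.swap_apply_right]))

theorem stmt_12_general [Fintype ι] [TopologicalSpace 𝕜] [OrderTopology 𝕜]
    (hopen : IsOpen (C : Set (ι → 𝕜))) (hpos : {x : ι → 𝕜 | ∀ i, 0 < x i} ⊆ C)
    (hperm : ∀ x ∈ C, ∀ σ : Equiv.Perm ι, x ∘ σ ∈ C)
    (hne : atInfinity (C : Set (ι → 𝕜)) ≠ Set.univ) (k : ι) :
    atInfinity (C : Set (ι → 𝕜)) ⊆ {x | 0 < ∑ i ∈ Finset.univ.erase k, x i} := by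
  intro x hx
  by_contra hsum
  obtain ⟨R, hR⟩ := (hx k).exists
  obtain ⟨y, hyC, hy⟩ := exists_mem_forall_eq_sum_of_perm_invariant
    (fun _ ha _ hb => C.add_mem ha hb) hperm hR (Finset.univ.erase k)
  have hy_nonpos : ∀ i ≠ k, y i ≤ 0 := fun i hi => by
    rw [hy i (Finset.mem_erase.mpr ⟨hi, Finset.mem_univ i⟩),
      Finset.sum_update_of_notMem (Finset.notMem_erase k _)]
    exact not_lt.mp hsum
  obtain ⟨z, hzC, hzy⟩ := exists_mem_forall_lt_of_isOpen hopen hyC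
  have hz_neg : ∀ i ≠ k, z i < 0 := fun i hi => (hzy i).trans_le (hy_nonpos i hi)
  exact hne (atInfinity_eq_univ_of_forall_ne_neg hpos hperm hzC hz_neg)

end OrderedField

/-- The set `Γ` of Assumption (A) as a bundled convex cone. -/
def AssumptionA.convexCone {n : ℕ} {Γ : Set (Fin n → ℝ)} {f : (Fin n → ℝ) → ℝ}
    (hA : AssumptionA n Γ f) : ConvexCone ℝ (Fin n → ℝ) where
  carrier := Γ
  smul_mem' t ht x hx := hA.cone x hx t ht
  add_mem' x hx y hy := by
    have hmid : midpoint ℝ x y ∈ Γ := hA.convex.midpoint_mem hx hy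
    have hadd := hA.cone _ hmid 2 two_pos
    rwa [two_smul, midpoint_add_self] at hadd

/-- Proposition 2.11 of the paper: if `Γ_∞ ≠ ℝⁿ`, then for every `k`,
`Γ_∞ ⊆ {λ ∈ ℝⁿ : Σ_{i≠k} λᵢ > 0}`. -/
theorem stmt_12 (n : ℕ) (Γ : Set (Fin n → ℝ)) (f : (Fin n → ℝ) → ℝ)
    (hA : AssumptionA n Γ f)
    (hne : GammaInfty n Γ ≠ Set.univ) :
    ∀ k : Fin n,
      GammaInfty n Γ ⊆ {x : Fin n → ℝ | 0 < ∑ i ∈ Finset.univ.erase k, x i} := by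
  rw [gammaInfty_eq_atInfinity] at hne ⊢
  exact stmt_12_general (C := hA.convexCone) hA.isOpen hA.orthant_subset hA.perm_invariant hne
end

section
/- Let Ω ⊆ ℝⁿ be an open convex set and let u : Ω → ℝ be strictly convex in the following sense: for every x₀ ∈ Ω there exists an affine function l on ℝⁿ such that u(x) ≥ l(x) for all x ∈ Ω, with equality if and only if x = x₀. Let h : Ω → ℝ be continuous with h > 0 on Ω. Then there exists a C^∞ function ũ : Ω → ℝ such that u ≤ ũ ≤ u + h on Ω and the Hessian matrix D²ũ(x) is positive definite at every x ∈ Ω; in particular ũ is convex. -/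
/-!
Given `x₀ ∈ Ω` and a neighbourhood `W` of `x₀`, let `l` be the affine function supporting `u` at
`x₀`. By convexity `u - l` grows at least linearly away from `x₀`, whereas
`φ x = √(1 + |x - x₀|²)` has positive definite Hessian and at most linear growth. So for small
`δ > 0` the function `l + δ φ` exceeds `u` at `x₀`, lies below `u` outside `W` and below `u + h`
everywhere. Taking a smooth maximum with finitely many such functions raises a function below
`u + h` above `u` on a given compact set, and changes it elsewhere only where it is below `u`.
Running through an exhaustion of `Ω` by compact sets, each point is affected by only finitely many
of these changes, so the successive functions stabilise locally.
-/

open Set Filter Topology Metric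
open scoped ContDiff InnerProductSpace

section SmoothMax

/-- A smooth convex substitute for the positive part `t ↦ max 0 t`, equal to `0` on `t ≤ 0` and to
`t - c` for some constant `c ∈ [0, 1]` on `t ≥ 1`. -/
noncomputable def smoothRamp (t : ℝ) : ℝ := ∫ s in (0 : ℝ)..t, Real.smoothTransition s

theorem hasDerivAt_smoothRamp (t : ℝ) : HasDerivAt smoothRamp (Real.smoothTransition t) t :=
  (Real.smoothTransition.continuous.integral_hasStrictDerivAt 0 t).hasDerivAt

theorem contDiff_smoothRamp : ContDiff ℝ ∞ smoothRamp := by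
  rw [contDiff_infty_iff_deriv, funext fun t ↦ (hasDerivAt_smoothRamp t).deriv]
  exact ⟨fun t ↦ (hasDerivAt_smoothRamp t).differentiableAt, Real.smoothTransition.contDiff⟩

theorem monotone_smoothRamp : Monotone smoothRamp :=
  monotone_of_hasDerivAt_nonneg hasDerivAt_smoothRamp Real.smoothTransition.nonneg

theorem monotone_sub_smoothRamp : Monotone fun t ↦ t - smoothRamp t :=
  monotone_of_hasDerivAt_nonneg (fun t ↦ (hasDerivAt_id t).sub (hasDerivAt_smoothRamp t))
    fun t ↦ sub_nonneg.2 (Real.smoothTransition.le_one t)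

theorem smoothRamp_of_nonpos {t : ℝ} (ht : t ≤ 0) : smoothRamp t = 0 := by
  refine (intervalIntegral.integral_congr (g := fun _ ↦ 0) fun s hs ↦ ?_).trans
    intervalIntegral.integral_zero
  rw [uIcc_of_ge ht] at hs
  exact Real.smoothTransition.zero_of_nonpos hs.2

theorem smoothRamp_nonneg (t : ℝ) : 0 ≤ smoothRamp t :=
  (smoothRamp_of_nonpos (min_le_right t 0)).ge.trans (monotone_smoothRamp (min_le_left t 0))

theorem smoothRamp_le_max (t : ℝ) : smoothRamp t ≤ max 0 t := by
  rcases le_total t 0 with ht | ht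
  · exact (smoothRamp_of_nonpos ht).trans_le (le_max_left 0 t)
  · have h : 0 - smoothRamp 0 ≤ t - smoothRamp t := monotone_sub_smoothRamp ht
    rw [smoothRamp_of_nonpos le_rfl] at h
    exact le_max_of_le_right (by linarith)

theorem sub_one_le_smoothRamp (t : ℝ) : t - 1 ≤ smoothRamp t := by
  rcases le_total t 1 with ht | ht
  · exact (sub_nonpos.2 ht).trans (smoothRamp_nonneg t)
  have integrable (a b : ℝ) : IntervalIntegrable Real.smoothTransition MeasureTheory.volume a b :=
    Real.smoothTransition.continuous.intervalIntegrable a b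
  have increment : smoothRamp t - smoothRamp 1 = t - 1 := calc
    smoothRamp t - smoothRamp 1 = ∫ s in (1 : ℝ)..t, Real.smoothTransition s :=
      intervalIntegral.integral_interval_sub_left (integrable 0 t) (integrable 0 1)
    _ = ∫ _ in (1 : ℝ)..t, (1 : ℝ) := intervalIntegral.integral_congr fun s hs ↦
      Real.smoothTransition.one_of_one_le (uIcc_of_le ht ▸ hs).1
    _ = t - 1 := integral_one
  linarith [smoothRamp_nonneg 1]

/-- A smooth substitute for `max s t`, correct up to an error `η`; it is not symmetric, and equals
`s` where `t ≤ s`. -/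
noncomputable def smoothMax (η s t : ℝ) : ℝ := s + η * smoothRamp (η⁻¹ * (t - s))

variable {η : ℝ} {s t : ℝ}

theorem smoothMax_of_le (hη : 0 < η) (h : t ≤ s) : smoothMax η s t = s := by
  have : η⁻¹ * (t - s) ≤ 0 :=
    mul_nonpos_of_nonneg_of_nonpos (inv_nonneg.2 hη.le) (sub_nonpos.2 h)
  rw [smoothMax, smoothRamp_of_nonpos this, mul_zero, add_zero]

theorem le_smoothMax_left (hη : 0 < η) : s ≤ smoothMax η s t :=
  le_add_of_nonneg_right (mul_nonneg hη.le (smoothRamp_nonneg _))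

theorem sub_le_smoothMax (hη : 0 < η) : t - η ≤ smoothMax η s t := calc
  t - η = s + η * (η⁻¹ * (t - s) - 1) := by field_simp; ring
  _ ≤ smoothMax η s t := by unfold smoothMax; gcongr; exact sub_one_le_smoothRamp _

theorem smoothMax_le_max (hη : 0 < η) : smoothMax η s t ≤ max s t := calc
  smoothMax η s t ≤ s + η * max 0 (η⁻¹ * (t - s)) := by
    unfold smoothMax; gcongr; exact smoothRamp_le_max _
  _ = max s t := by
    rw [mul_max_of_nonneg _ _ hη.le, mul_zero, mul_inv_cancel_left₀ hη.ne', ← max_add_add_left,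
      add_zero, add_sub_cancel]

end SmoothMax

section Hessian

variable {E F : Type*} [NormedAddCommGroup E] [NormedSpace ℝ E]
  [NormedAddCommGroup F] [NormedSpace ℝ F]

theorem convexOn_of_hessian_nonneg {Ω : Set E} (hopen : IsOpen Ω) (hconv : Convex ℝ Ω)
    {f : E → ℝ} (hf : ContDiffOn ℝ 2 f Ω)
    (hess : ∀ x ∈ Ω, ∀ w : E, 0 ≤ fderiv ℝ (fderiv ℝ f) x w w) : ConvexOn ℝ Ω f := by
  refine ⟨hconv, fun x hx y hy a b ha hb hab ↦ ?_⟩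
  let line : ℝ →ᵃ[ℝ] E := AffineMap.lineMap x y
  have hline (s : ℝ) : HasDerivAt line (y - x) s := AffineMap.hasDerivAt_lineMap
  have hD : IsOpen (line ⁻¹' Ω) := hopen.preimage AffineMap.lineMap_continuous
  have hf' (s : ℝ) (hs : s ∈ line ⁻¹' Ω) :
      HasDerivAt (f ∘ line) (fderiv ℝ f (line s) (y - x)) s :=
    ((hf.contDiffAt (hopen.mem_nhds hs)).differentiableAt two_ne_zero).hasFDerivAt.comp_hasDerivAt
      s (hline s)
  have hf'' (s : ℝ) (hs : s ∈ line ⁻¹' Ω) : HasDerivAt (fun s ↦ fderiv ℝ f (line s) (y - x))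
      (fderiv ℝ (fderiv ℝ f) (line s) (y - x) (y - x)) s := by
    have hfd : DifferentiableAt ℝ (fderiv ℝ f) (line s) :=
      ((hf.contDiffAt (hopen.mem_nhds hs)).fderiv_right (m := 1) le_rfl).differentiableAt
        one_ne_zero
    simpa using (hfd.hasFDerivAt.comp_hasDerivAt s (hline s)).clm_apply
      (hasDerivAt_const s (y - x))
  have hconvex : ConvexOn ℝ (line ⁻¹' Ω) (f ∘ line) := by
    refine convexOn_of_hasDerivWithinAt2_nonneg (hconv.affine_preimage line)
      (f' := fun s ↦ fderiv ℝ f (line s) (y - x))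
      (f'' := fun s ↦ fderiv ℝ (fderiv ℝ f) (line s) (y - x) (y - x))
      (fun s hs ↦ (hf' s hs).continuousAt.continuousWithinAt) ?_ ?_ ?_ <;>
    rw [hD.interior_eq]
    exacts [fun s hs ↦ (hf' s hs).hasDerivWithinAt, fun s hs ↦ (hf'' s hs).hasDerivWithinAt,
      fun s hs ↦ hess _ hs _]
  obtain rfl : a = 1 - b := eq_sub_of_add_eq hab
  simpa [line, AffineMap.lineMap_apply_module] using hconvex.2 (x := 0) (y := 1)
    (by simpa [line] using hx) (by simpa [line] using hy) ha hb hab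

theorem hasFDerivAt_smoothMax {f g : E → ℝ} {f' g' : E →L[ℝ] ℝ} {x : E} {η : ℝ} (hη : 0 < η)
    (hf : HasFDerivAt f f' x) (hg : HasFDerivAt g g' x) :
    HasFDerivAt (fun x ↦ smoothMax η (f x) (g x))
      (f' + Real.smoothTransition (η⁻¹ * (g x - f x)) • (g' - f')) x := by
  refine (hf.add (((hasDerivAt_smoothRamp _).comp_hasFDerivAt x
    ((hg.fun_sub hf).const_mul η⁻¹)).const_mul η)).congr_fderiv ?_
  rw [smul_smul, smul_smul, mul_right_comm, mul_inv_cancel₀ hη.ne', one_mul]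

/-- Smooth functions on the whole space with everywhere positive definite Hessian: the class of
functions closed under smooth maxima from which the approximation is assembled. -/
structure SmoothPosDefHessian (f : E → ℝ) : Prop where
  contDiff : ContDiff ℝ ∞ f
  hessian_pos : ∀ x w : E, w ≠ 0 → 0 < fderiv ℝ (fderiv ℝ f) x w w

namespace SmoothPosDefHessian

theorem of_hasFDerivAt {f : E → ℝ} {f' : E → E →L[ℝ] ℝ} {f'' : E → E →L[ℝ] E →L[ℝ] ℝ}
    (hf : ContDiff ℝ ∞ f) (hf' : ∀ x, HasFDerivAt f (f' x) x)
    (hf'' : ∀ x, HasFDerivAt f' (f'' x) x) (pos : ∀ x w, w ≠ 0 → 0 < f'' x w w) :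
    SmoothPosDefHessian f where
  contDiff := hf
  hessian_pos x := by
    rw [funext fun x ↦ (hf' x).fderiv, (hf'' x).fderiv]
    exact pos x

variable {f g : E → ℝ}

protected theorem hasFDerivAt (hf : SmoothPosDefHessian f) (x : E) :
    HasFDerivAt f (fderiv ℝ f x) x :=
  (hf.contDiff.differentiable (by simp) x).hasFDerivAt

theorem hasFDerivAt_fderiv (hf : SmoothPosDefHessian f) (x : E) :
    HasFDerivAt (fderiv ℝ f) (fderiv ℝ (fderiv ℝ f) x) x :=
  ((hf.contDiff.fderiv_right (m := ∞) (by simp)).differentiable (by simp) x).hasFDerivAt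

theorem comp_affine {f : F → ℝ} (hf : SmoothPosDefHessian f) {L : E →L[ℝ] F}
    (hL : Function.Injective L) (c : F) : SmoothPosDefHessian fun x ↦ f (L x + c) := by
  have haff (x : E) : HasFDerivAt (fun x ↦ L x + c) L x := L.hasFDerivAt.add_const c
  refine of_hasFDerivAt (hf.contDiff.comp (by fun_prop))
    (fun x ↦ (hf.hasFDerivAt (L x + c)).comp x (haff x))
    (fun x ↦ ((hf.hasFDerivAt_fderiv (L x + c)).comp x (haff x)).clm_comp
      (hasFDerivAt_const L x)) fun x w hw ↦ ?_
  simpa using hf.hessian_pos (L x + c) (L w) ((map_ne_zero_iff L hL).2 hw)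

theorem affine_add_const_mul (hf : SmoothPosDefHessian f) (l : E →L[ℝ] ℝ) (b : ℝ) {δ : ℝ}
    (hδ : 0 < δ) : SmoothPosDefHessian fun x ↦ b + l x + δ * f x := by
  refine of_hasFDerivAt (by have := hf.contDiff; fun_prop)
    (fun x ↦ (l.hasFDerivAt.const_add b).add ((hf.hasFDerivAt x).const_mul δ))
    (fun x ↦ ((hf.hasFDerivAt_fderiv x).const_smul δ).const_add l) fun x w hw ↦ ?_
  exact mul_pos hδ (hf.hessian_pos x w hw)

theorem smoothMax (hf : SmoothPosDefHessian f) (hg : SmoothPosDefHessian g) {η : ℝ}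
    (hη : 0 < η) : SmoothPosDefHessian fun x ↦ smoothMax η (f x) (g x) := by
  let θ := Real.smoothTransition
  let T (x : E) : ℝ := η⁻¹ * (g x - f x)
  let D (x : E) : E →L[ℝ] ℝ := fderiv ℝ g x - fderiv ℝ f x
  have hθT (x : E) : HasFDerivAt (θ ∘ T) (deriv θ (T x) • η⁻¹ • D x) x :=
    ((Real.smoothTransition.contDiff (n := 1)).differentiable one_ne_zero _).hasDerivAt
      |>.comp_hasFDerivAt x (((hg.hasFDerivAt x).fun_sub (hf.hasFDerivAt x)).const_mul η⁻¹)
  refine of_hasFDerivAt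
    (hf.contDiff.add (contDiff_const.mul
      (contDiff_smoothRamp.comp (contDiff_const.mul (hg.contDiff.sub hf.contDiff)))))
    (fun x ↦ hasFDerivAt_smoothMax hη (hf.hasFDerivAt x) (hg.hasFDerivAt x))
    (fun x ↦ (hf.hasFDerivAt_fderiv x).add
      ((hθT x).smul ((hg.hasFDerivAt_fderiv x).sub (hf.hasFDerivAt_fderiv x)))) fun x w hw ↦ ?_
  let A := fderiv ℝ (fderiv ℝ f) x w w
  let B := fderiv ℝ (fderiv ℝ g) x w w
  have combination_pos : 0 < (1 - θ (T x)) * A + θ (T x) * B :=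
    (convex_Ioi (0 : ℝ)) (hf.hessian_pos x w hw) (hg.hessian_pos x w hw)
      (sub_nonneg.2 (Real.smoothTransition.le_one _)) (Real.smoothTransition.nonneg _)
      (sub_add_cancel _ _)
  have square_nonneg : 0 ≤ deriv θ (T x) * η⁻¹ * D x w ^ 2 := by
    have : 0 ≤ deriv θ (T x) := Real.smoothTransition.monotone.deriv_nonneg
    positivity
  calc
    0 < (1 - θ (T x)) * A + θ (T x) * B + deriv θ (T x) * η⁻¹ * D x w ^ 2 :=
      add_pos_of_pos_of_nonneg combination_pos square_nonneg
    _ = A + (θ (T x) * (B - A) + deriv θ (T x) * (η⁻¹ * D x w) * D x w) := by ring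

end SmoothPosDefHessian

/-- The smooth function `√(1 + ‖x‖²)`. -/
noncomputable def japaneseBracket {F : Type*} [Norm F] (x : F) : ℝ := √(1 + ‖x‖ ^ 2)

theorem japaneseBracket_pos {F : Type*} [Norm F] (x : F) : 0 < japaneseBracket x := by
  unfold japaneseBracket; positivity

theorem japaneseBracket_le {F : Type*} [SeminormedAddGroup F] (x : F) :
    japaneseBracket x ≤ 1 + ‖x‖ :=
  Real.sqrt_le_iff.2 ⟨by positivity, by nlinarith [norm_nonneg x]⟩

theorem smoothPosDefHessian_japaneseBracket {F : Type*} [NormedAddCommGroup F]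
    [InnerProductSpace ℝ F] : SmoothPosDefHessian (japaneseBracket : F → ℝ) := by
  let φ : F → ℝ := japaneseBracket
  let B : F →L[ℝ] F →L[ℝ] ℝ := innerSL ℝ
  have φ_pos (x : F) : 0 < φ x := japaneseBracket_pos x
  have φ_sq (x : F) : φ x ^ 2 = 1 + ‖x‖ ^ 2 := Real.sq_sqrt (by positivity)
  have hφ (x : F) : HasFDerivAt φ ((φ x)⁻¹ • B x) x := by
    refine (((hasStrictFDerivAt_norm_sq x).hasFDerivAt.const_add 1).sqrt
      (by positivity)).congr_fderiv ?_
    rw [← Nat.cast_smul_eq_nsmul ℝ, smul_smul]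
    simp [φ, japaneseBracket, B]
  refine SmoothPosDefHessian.of_hasFDerivAt
    (((contDiff_const.add (contDiff_norm_sq ℝ)).sqrt fun x ↦ by positivity)) hφ
    (fun x ↦ ((hasDerivAt_inv (φ_pos x).ne').comp_hasFDerivAt x (hφ x)).smul
      B.hasFDerivAt) fun x w hw ↦ ?_
  have cauchy_schwarz : ⟪x, w⟫_ℝ ^ 2 ≤ ‖x‖ ^ 2 * ‖w‖ ^ 2 := by
    simpa only [sq, real_inner_self_eq_norm_sq, mul_mul_mul_comm]
      using real_inner_mul_inner_self_le x w
  have hw_pos : 0 < ‖w‖ ^ 2 := by positivity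
  calc
    0 < (‖w‖ ^ 2 + (‖x‖ ^ 2 * ‖w‖ ^ 2 - ⟪x, w⟫_ℝ ^ 2)) / φ x ^ 3 :=
      div_pos (add_pos_of_pos_of_nonneg hw_pos (sub_nonneg.2 cauchy_schwarz)) (pow_pos (φ_pos x) 3)
    _ = (φ x)⁻¹ * ⟪w, w⟫_ℝ + -(φ x ^ 2)⁻¹ * ((φ x)⁻¹ * ⟪x, w⟫_ℝ) * ⟪x, w⟫_ℝ := by
      rw [real_inner_self_eq_norm_sq]
      have := (φ_pos x).ne'
      field_simp
      rw [φ_sq]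
      ring

theorem exists_smoothPosDefHessian_le_linear [FiniteDimensional ℝ E] (x₀ : E) :
    ∃ φ : E → ℝ, SmoothPosDefHessian φ ∧ (∀ x, 0 < φ x) ∧
      ∃ C ≥ 0, ∀ x, φ x ≤ 1 + C * ‖x - x₀‖ := by
  let L : E →L[ℝ] EuclideanSpace ℝ (Fin (Module.finrank ℝ E)) := (toEuclidean : E ≃L[ℝ] _)
  refine ⟨fun x ↦ japaneseBracket (L x + -L x₀),
    smoothPosDefHessian_japaneseBracket.comp_affine toEuclidean.injective _,
    fun x ↦ japaneseBracket_pos _, ‖L‖, norm_nonneg L, fun x ↦ (japaneseBracket_le _).trans ?_⟩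
  rw [← sub_eq_add_neg, ← map_sub]
  gcongr
  exact L.le_opNorm _

end Hessian

section Topology

theorem exists_compact_exhaustion_of_isOpen {X : Type*} [TopologicalSpace X]
    [LocallyCompactSpace X] [SecondCountableTopology X] {Ω : Set X} (hopen : IsOpen Ω) :
    ∃ K : ℕ → Set X, (∀ j, IsCompact (K j)) ∧ (∀ j, K j ⊆ interior (K (j + 1))) ∧
      ⋃ j, K j = Ω := by
  have : LocallyCompactSpace Ω := hopen.locallyCompactSpace
  let C := CompactExhaustion.choice Ω
  refine ⟨fun j ↦ Subtype.val '' C j, fun j ↦ (C.isCompact j).image continuous_subtype_val,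
    fun j ↦ ?_, ?_⟩
  · exact (image_mono (C.subset_interior_succ j)).trans
      (hopen.isOpenMap_subtype_val.image_interior_subset _)
  · rw [← image_iUnion, C.iUnion_eq, image_univ, Subtype.range_coe]

theorem exists_eqOn_of_eqOn_succ {α β : Type*} {K : ℕ → Set α} (hK : Monotone K)
    {V : ℕ → α → β} (hV : ∀ j, EqOn (V (j + 1)) (V j) (K j)) :
    ∃ v : α → β, ∀ j, EqOn v (V j) (K j) := by
  have stable {i j : ℕ} (hij : i ≤ j) : EqOn (V j) (V i) (K i) := by
    induction j, hij using Nat.le_induction with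
    | base => exact fun _ _ ↦ rfl
    | succ j hij ih => exact ((hV j).mono (hK hij)).trans ih
  refine ⟨fun x ↦ V (sInf {j | x ∈ K j}) x, fun j x hx ↦ ?_⟩
  exact (stable (Nat.sInf_le hx) (Nat.sInf_mem (s := {j | x ∈ K j}) ⟨j, hx⟩)).symm

end Topology

section StrictSupport

variable {E : Type*} [NormedAddCommGroup E] [NormedSpace ℝ E] {Ω : Set E} {u : E → ℝ} {x₀ : E}

/-- Strict convexity in the sense that at each `x₀ ∈ Ω` some affine function touches `u` from below
on `Ω` exactly at `x₀`. The affine function is normalised to `x ↦ u x₀ + l (x - x₀)`. -/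
def StrictlySupportedOn (Ω : Set E) (u : E → ℝ) : Prop :=
  ∀ x₀ ∈ Ω, ∃ l : E →L[ℝ] ℝ, ∀ x ∈ Ω, x ≠ x₀ → u x₀ + l (x - x₀) < u x

theorem StrictlySupportedOn.convexOn (hu : StrictlySupportedOn Ω u) (hconv : Convex ℝ Ω) :
    ConvexOn ℝ Ω u := by
  refine ⟨hconv, fun x hx y hy a b ha hb hab ↦ ?_⟩
  obtain ⟨l, hl⟩ := hu _ (hconv hx hy ha hb hab)
  set z := a • x + b • y with hz
  have support (p : E) (hp : p ∈ Ω) : u z + l (p - z) ≤ u p := by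
    rcases eq_or_ne p z with rfl | hpz
    · simp
    · exact (hl p hp hpz).le
  have balance : a • (x - z) + b • (y - z) = 0 := by
    rw [smul_sub, smul_sub, sub_add_sub_comm, ← add_smul, hab, one_smul, hz, sub_self]
  calc
    u z = a • (u z + l (x - z)) + b • (u z + l (y - z)) := by
      rw [smul_add, smul_add, add_add_add_comm, ← add_smul, hab, one_smul, ← map_smul, ← map_smul,
        ← map_add, balance, map_zero, add_zero]
    _ ≤ a • u x + b • u y := by gcongr <;> exact support _ ‹_›

theorem mul_norm_sub_le_of_convexOn {f : E → ℝ} (hf : ConvexOn ℝ Ω f) (hx₀ : x₀ ∈ Ω)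
    (hfx₀ : f x₀ ≤ 0) {r m : ℝ} (hr : 0 < r) (hm : ∀ z ∈ sphere x₀ r, m ≤ f z) {x : E}
    (hx : x ∈ Ω) (hxr : r ≤ ‖x - x₀‖) : m * ‖x - x₀‖ ≤ r * f x := by
  have norm_pos : 0 < ‖x - x₀‖ := hr.trans_le hxr
  let t := r / ‖x - x₀‖
  have ht : 0 < t := div_pos hr norm_pos
  have ht1 : t ≤ 1 := (div_le_one norm_pos).2 hxr
  have mem_sphere : (1 - t) • x₀ + t • x ∈ sphere x₀ r := by
    have : (1 - t) • x₀ + t • x - x₀ = t • (x - x₀) := by module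
    rw [mem_sphere_iff_norm, this, norm_smul, Real.norm_of_nonneg ht.le,
      div_mul_cancel₀ _ norm_pos.ne']
  have bound : m ≤ t * f x := calc
    m ≤ f ((1 - t) • x₀ + t • x) := hm _ mem_sphere
    _ ≤ (1 - t) * f x₀ + t * f x := hf.2 hx₀ hx (sub_nonneg.2 ht1) ht.le (sub_add_cancel 1 t)
    _ ≤ t * f x := by linarith [mul_nonpos_of_nonneg_of_nonpos (sub_nonneg.2 ht1) hfx₀]
  calc
    m * ‖x - x₀‖ ≤ t * f x * ‖x - x₀‖ := by gcongr
    _ = r * f x := by rw [mul_right_comm, div_mul_cancel₀ _ norm_pos.ne']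

theorem StrictlySupportedOn.exists_linear_growth [FiniteDimensional ℝ E]
    (hu : StrictlySupportedOn Ω u) (hopen : IsOpen Ω) (hconv : Convex ℝ Ω) (hx₀ : x₀ ∈ Ω) {r : ℝ}
    (hr : 0 < r) (hball : closedBall x₀ r ⊆ Ω) :
    ∃ l : E →L[ℝ] ℝ, (∀ x ∈ Ω, u x₀ + l (x - x₀) ≤ u x) ∧ ∃ m > 0, ∀ x ∈ Ω, r ≤ ‖x - x₀‖ →
      m * ‖x - x₀‖ ≤ r * (u x - (u x₀ + l (x - x₀))) := by
  obtain ⟨l, hl⟩ := hu x₀ hx₀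
  have support (x : E) (hx : x ∈ Ω) : u x₀ + l (x - x₀) ≤ u x := by
    rcases eq_or_ne x x₀ with rfl | hne
    · simp
    · exact (hl x hx hne).le
  have affine_concave : ConcaveOn ℝ Ω fun x ↦ u x₀ + l (x - x₀) := by
    refine ((l.toLinearMap.concaveOn hconv).add_const (u x₀ - l x₀)).congr fun x _ ↦ ?_
    simp only [map_sub, Pi.add_apply, ContinuousLinearMap.coe_coe]
    ring
  have gap_convex : ConvexOn ℝ Ω fun x ↦ u x - (u x₀ + l (x - x₀)) :=
    (hu.convexOn hconv).sub affine_concave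
  obtain ⟨m, m_pos, hm⟩ := (isCompact_sphere x₀ r).exists_forall_le'
    ((gap_convex.continuousOn hopen).mono (sphere_subset_closedBall.trans hball)) (a := 0)
    fun z hz ↦ sub_pos.2 (hl z (hball (sphere_subset_closedBall hz)) (ne_of_mem_sphere hz hr.ne'))
  exact ⟨l, support, m, m_pos, fun x hx hxr ↦
    mul_norm_sub_le_of_convexOn gap_convex hx₀ (by simp) hr hm hx hxr⟩

theorem strictlySupportedOn_of_sum_mul_add {n : ℕ} {Ω : Set (Fin n → ℝ)} {u : (Fin n → ℝ) → ℝ}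
    (hu : ∀ x₀ ∈ Ω, ∃ (a : Fin n → ℝ) (b : ℝ),
      (∀ x ∈ Ω, (∑ i, a i * x i) + b ≤ u x) ∧
      (∀ x ∈ Ω, u x = (∑ i, a i * x i) + b ↔ x = x₀)) : StrictlySupportedOn Ω u := by
  intro x₀ hx₀
  obtain ⟨a, b, le, eq_iff⟩ := hu x₀ hx₀
  refine ⟨∑ i, a i • ContinuousLinearMap.proj i, fun x hx hne ↦ ?_⟩
  have hlt := (le x hx).lt_of_ne' (mt (eq_iff x hx).1 hne)
  have hx₀ := (eq_iff x₀ hx₀).2 rfl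
  simp only [sum_apply, smul_apply, ContinuousLinearMap.proj_apply, Pi.sub_apply, smul_eq_mul,
    mul_sub, Finset.sum_sub_distrib]
  linarith

end StrictSupport

section Approximation

variable {E : Type*} [NormedAddCommGroup E] [NormedSpace ℝ E] {Ω W A : Set E}
  {u h H v v' : E → ℝ} {x₀ : E}

/-- The admissible functions of the construction: those with positive definite Hessian lying below
the upper barrier `H` on `Ω`. -/
structure SmoothMinorantOn (Ω : Set E) (H v : E → ℝ) : Prop extends SmoothPosDefHessian v where
  le : ∀ x ∈ Ω, v x ≤ H x

theorem SmoothMinorantOn.smoothMax (hv : SmoothMinorantOn Ω H v) (hv' : SmoothMinorantOn Ω H v')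
    {η : ℝ} (hη : 0 < η) : SmoothMinorantOn Ω H fun x ↦ smoothMax η (v x) (v' x) where
  toSmoothPosDefHessian := hv.toSmoothPosDefHessian.smoothMax hv'.toSmoothPosDefHessian hη
  le x hx := (smoothMax_le_max hη).trans (max_le (hv.le x hx) (hv'.le x hx))

/-- Every point of `Ω` carries arbitrarily concentrated peaks: smooth minorants of `H` that exceed
`u` at the point but not outside a prescribed neighbourhood. -/
def HasLocalPeaksOn (Ω : Set E) (u H : E → ℝ) : Prop :=
  ∀ W, IsOpen W → W ⊆ Ω → ∀ x₀ ∈ W, ∃ g, SmoothMinorantOn Ω H g ∧ (∀ x ∈ Ω \ W, g x ≤ u x) ∧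
    u x₀ < g x₀

theorem StrictlySupportedOn.hasLocalPeaksOn [FiniteDimensional ℝ E]
    (hu : StrictlySupportedOn Ω u) (hopen : IsOpen Ω) (hconv : Convex ℝ Ω)
    (hh : LowerSemicontinuousOn h Ω) (hpos : ∀ x ∈ Ω, 0 < h x) :
    HasLocalPeaksOn Ω u (u + h) := by
  intro W hW hWΩ x₀ hx₀
  obtain ⟨r, hr, hrW⟩ := nhds_basis_closedBall.mem_iff.1 (hW.mem_nhds hx₀)
  have hrΩ := hrW.trans hWΩ
  obtain ⟨l, support, m, m_pos, growth⟩ :=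
    hu.exists_linear_growth hopen hconv (hWΩ hx₀) hr hrΩ
  obtain ⟨z, hz, hmin⟩ := (hh.mono hrΩ).exists_isMinOn ⟨x₀, mem_closedBall_self hr.le⟩
    (isCompact_closedBall x₀ r)
  obtain ⟨φ, φ_smooth, φ_pos, C, C_nonneg, φ_le⟩ := exists_smoothPosDefHessian_le_linear x₀
  obtain ⟨δ, δ_pos, hδm, hδh⟩ : ∃ δ > 0, δ * (1 + C * r) ≤ m ∧ δ * (1 + C * r) ≤ h z := by
    refine ⟨min m (h z) / (1 + C * r), div_pos (lt_min m_pos (hpos z (hrΩ hz))) (by positivity), ?_⟩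
    rw [div_mul_cancel₀ _ (by positivity)]
    exact ⟨min_le_left _ _, min_le_right _ _⟩
  let g (x : E) : ℝ := u x₀ + l (x - x₀) + δ * φ x
  have g_le_outside (x : E) (hx : x ∈ Ω) (hxr : r ≤ ‖x - x₀‖) : g x ≤ u x := by
    refine le_sub_iff_add_le'.1 (le_of_mul_le_mul_left ?_ hr)
    calc
      r * (δ * φ x) ≤ r * (δ * (1 + C * ‖x - x₀‖)) := by gcongr; exact φ_le x
      _ = δ * (r + C * r * ‖x - x₀‖) := by ring
      _ ≤ δ * (‖x - x₀‖ + C * r * ‖x - x₀‖) := by gcongr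
      _ = δ * (1 + C * r) * ‖x - x₀‖ := by ring
      _ ≤ m * ‖x - x₀‖ := by gcongr
      _ ≤ r * (u x - (u x₀ + l (x - x₀))) := growth x hx hxr
  have g_le_inside (x : E) (hx : x ∈ closedBall x₀ r) : g x ≤ u x + h x := by
    refine add_le_add (support x (hrΩ hx)) ?_
    calc
      δ * φ x ≤ δ * (1 + C * ‖x - x₀‖) := by gcongr; exact φ_le x
      _ ≤ δ * (1 + C * r) := by gcongr; exact mem_closedBall_iff_norm.1 hx
      _ ≤ h x := hδh.trans (hmin hx)
  refine ⟨g, ⟨?_, fun x hx ↦ ?_⟩, fun x hx ↦ ?_, ?_⟩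
  · have : g = fun x ↦ u x₀ - l x₀ + l x + δ * φ x := by
      funext x
      simp only [g, map_sub]
      ring
    exact this ▸ φ_smooth.affine_add_const_mul l _ δ_pos
  · rcases le_total ‖x - x₀‖ r with hxr | hxr
    · exact g_le_inside x (mem_closedBall_iff_norm.2 hxr)
    · exact (g_le_outside x hx hxr).trans (le_add_of_nonneg_right (hpos x hx).le)
  · exact g_le_outside x hx.1 (le_of_not_ge fun hxr ↦ hx.2 (hrW (mem_closedBall_iff_norm.2 hxr)))
  · simpa [g] using mul_pos δ_pos (φ_pos x₀)

/-- `v'` is obtained from `v` by raising it above `u` on `A`, without changing it at those points of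
`S` where it already lies above `u`. -/
structure IsRaise {α : Type*} (u : α → ℝ) (A S : Set α) (v v' : α → ℝ) : Prop where
  le : v ≤ v'
  le_on : ∀ x ∈ A, u x ≤ v' x
  eq_on : ∀ x ∈ S, u x ≤ v x → v' x = v x

theorem IsRaise.trans {α : Type*} {u v v' v'' : α → ℝ} {A B S : Set α} (hA : IsRaise u A S v v')
    (hB : IsRaise u B S v' v'') : IsRaise u (A ∪ B) S v v'' where
  le := hA.le.trans hB.le
  le_on x hx := hx.elim (fun hx ↦ (hA.le_on x hx).trans (hB.le x)) (hB.le_on x)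
  eq_on x hx hux := (hB.eq_on x hx (hux.trans (hA.le x))).trans (hA.eq_on x hx hux)

theorem HasLocalPeaksOn.exists_raise_nhds (hpeaks : HasLocalPeaksOn Ω u H) (hopen : IsOpen Ω)
    (hu : ContinuousOn u Ω) (hW : IsOpen W) (hWΩ : W ⊆ Ω) (hx₀ : x₀ ∈ W) :
    ∃ U ∈ 𝓝 x₀, ∀ v, SmoothMinorantOn Ω H v →
      ∃ v', SmoothMinorantOn Ω H v' ∧ IsRaise u U (Ω \ W) v v' := by
  obtain ⟨g, hg, g_le, lt_g⟩ := hpeaks W hW hWΩ x₀ hx₀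
  obtain ⟨η, hη, lt_g_sub⟩ : ∃ η > 0, u x₀ < g x₀ - η :=
    ⟨(g x₀ - u x₀) / 2, by linarith, by linarith⟩
  have hcont : ContinuousAt u x₀ := hu.continuousAt (hopen.mem_nhds (hWΩ hx₀))
  refine ⟨{x | u x < g x - η},
    hcont.eventually_lt (hg.contDiff.continuous.sub continuous_const).continuousAt lt_g_sub,
    fun v hv ↦ ⟨_, hv.smoothMax hg hη, ?_⟩⟩
  exact {
    le := fun x ↦ le_smoothMax_left hη
    le_on := fun x hx ↦ (le_of_lt hx).trans (sub_le_smoothMax hη)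
    eq_on := fun x hx hux ↦ smoothMax_of_le hη ((g_le x hx).trans hux) }

theorem HasLocalPeaksOn.exists_raise_of_isCompact (hpeaks : HasLocalPeaksOn Ω u H)
    (hopen : IsOpen Ω) (hu : ContinuousOn u Ω) (hW : IsOpen W) (hWΩ : W ⊆ Ω) (hA : IsCompact A)
    (hAW : A ⊆ W) : ∀ v, SmoothMinorantOn Ω H v →
      ∃ v', SmoothMinorantOn Ω H v' ∧ IsRaise u A (Ω \ W) v v' := by
  refine hA.induction_on (p := fun A ↦ ∀ v, SmoothMinorantOn Ω H v →
    ∃ v', SmoothMinorantOn Ω H v' ∧ IsRaise u A (Ω \ W) v v') ?empty ?mono ?union ?nhds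
  case empty => exact fun v hv ↦ ⟨v, hv, le_rfl, fun _ hx ↦ hx.elim, fun _ _ _ ↦ rfl⟩
  case mono =>
    intro A B hAB hB v hv
    obtain ⟨v', hv', hraise⟩ := hB v hv
    exact ⟨v', hv', hraise.le, fun x hx ↦ hraise.le_on x (hAB hx), hraise.eq_on⟩
  case union =>
    intro A B hA hB v hv
    obtain ⟨v', hv', hraise⟩ := hA v hv
    obtain ⟨v'', hv'', hraise'⟩ := hB v' hv'
    exact ⟨v'', hv'', hraise.trans hraise'⟩
  case nhds =>
    intro x₀ hx₀
    obtain ⟨U, hU, hraise⟩ := hpeaks.exists_raise_nhds hopen hu hW hWΩ (hAW hx₀)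
    exact ⟨U, mem_nhdsWithin_of_mem_nhds hU, hraise⟩

theorem HasLocalPeaksOn.exists_minorant_seq (hpeaks : HasLocalPeaksOn Ω u H) (hopen : IsOpen Ω)
    (hne : Ω.Nonempty) (hu : ContinuousOn u Ω) {K : ℕ → Set E} (hK : ∀ j, IsCompact (K j))
    (hKint : ∀ j, K j ⊆ interior (K (j + 1))) (hKΩ : ∀ j, K j ⊆ Ω) :
    ∃ V : ℕ → E → ℝ, (∀ j, SmoothMinorantOn Ω H (V j) ∧ ∀ x ∈ K (j + 1), u x ≤ V j x) ∧
      ∀ j, EqOn (V (j + 1)) (V j) (K j) := by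
  let P (j : ℕ) (v : E → ℝ) : Prop := SmoothMinorantOn Ω H v ∧ ∀ x ∈ K (j + 1), u x ≤ v x
  have hinit : ∃ v, P 0 v := by
    obtain ⟨x₀, hx₀⟩ := hne
    obtain ⟨g, hg, -⟩ := hpeaks Ω hopen subset_rfl x₀ hx₀
    obtain ⟨v, hv, hraise⟩ :=
      hpeaks.exists_raise_of_isCompact hopen hu hopen subset_rfl (hK 1) (hKΩ 1) g hg
    exact ⟨v, hv, hraise.le_on⟩
  have hstep (j : ℕ) (v : E → ℝ) (hv : P j v) : ∃ v', P (j + 1) v' ∧ EqOn v' v (K j) := by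
    obtain ⟨v', hv', hraise⟩ := hpeaks.exists_raise_of_isCompact hopen hu
      (hopen.sdiff (hK j).isClosed) sdiff_subset ((hK (j + 2)).diff isOpen_interior)
      (fun x hx ↦ ⟨hKΩ _ hx.1, fun hxj ↦ hx.2 (hKint j hxj)⟩) v hv.1
    refine ⟨v', ⟨hv', fun x hx ↦ ?_⟩, fun x hx ↦ ?_⟩
    · by_cases hxi : x ∈ interior (K (j + 1))
      · exact (hv.2 x (interior_subset hxi)).trans (hraise.le x)
      · exact hraise.le_on x ⟨hx, hxi⟩
    · exact hraise.eq_on x ⟨hKΩ j hx, fun hx' ↦ hx'.2 hx⟩ (hv.2 x (interior_subset (hKint j hx)))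
  obtain ⟨v₀, hv₀⟩ := hinit
  choose! next hnext using hstep
  let V (j : ℕ) : E → ℝ := Nat.rec v₀ next j
  have hV (j : ℕ) : P j (V j) := by
    induction j with
    | zero => exact hv₀
    | succ j ih => exact (hnext j _ ih).1
  exact ⟨V, hV, fun j ↦ (hnext j _ (hV j)).2⟩

theorem HasLocalPeaksOn.exists_locally_eq_minorant [FiniteDimensional ℝ E]
    (hpeaks : HasLocalPeaksOn Ω u H) (hopen : IsOpen Ω) (hne : Ω.Nonempty)
    (hu : ContinuousOn u Ω) :
    ∃ v : E → ℝ, ∀ x ∈ Ω, ∃ w, SmoothMinorantOn Ω H w ∧ u x ≤ w x ∧ v =ᶠ[𝓝 x] w := by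
  have : ProperSpace E := FiniteDimensional.proper_real E
  obtain ⟨K, hK, hKint, rfl⟩ := exists_compact_exhaustion_of_isOpen hopen
  have hmono : Monotone K := monotone_nat_of_le_succ fun j ↦ (hKint j).trans interior_subset
  obtain ⟨V, hV, hVsucc⟩ := hpeaks.exists_minorant_seq hopen hne hu hK hKint (subset_iUnion K)
  obtain ⟨v, hv⟩ := exists_eqOn_of_eqOn_succ hmono hVsucc
  refine ⟨v, fun x hx ↦ ?_⟩
  obtain ⟨j, hxj⟩ := mem_iUnion.1 hx
  have hnhds : K (j + 1) ∈ 𝓝 x := mem_interior_iff_mem_nhds.1 (hKint j hxj)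
  exact ⟨V (j + 1), (hV (j + 1)).1,
    (hV (j + 1)).2 x (hmono (Nat.le_add_right j 2) hxj), (hv (j + 1)).eventuallyEq_of_mem hnhds⟩

theorem stmt_14_general [FiniteDimensional ℝ E] (hopen : IsOpen Ω) (hconv : Convex ℝ Ω)
    (hu : StrictlySupportedOn Ω u) (hh : LowerSemicontinuousOn h Ω) (hpos : ∀ x ∈ Ω, 0 < h x) :
    ∃ v : E → ℝ, ContDiffOn ℝ ∞ v Ω ∧ (∀ x ∈ Ω, u x ≤ v x ∧ v x ≤ u x + h x) ∧
      (∀ x ∈ Ω, ∀ w : E, w ≠ 0 → 0 < fderiv ℝ (fderiv ℝ v) x w w) ∧ ConvexOn ℝ Ω v := by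
  rcases Ω.eq_empty_or_nonempty with rfl | hne
  · exact ⟨0, contDiffOn_const, by simp, by simp, convexOn_const 0 hconv⟩
  obtain ⟨v, hv⟩ := (hu.hasLocalPeaksOn hopen hconv hh hpos).exists_locally_eq_minorant hopen hne
    ((hu.convexOn hconv).continuousOn hopen)
  have smooth : ContDiffOn ℝ ∞ v Ω := fun x hx ↦ by
    obtain ⟨w, hw, -, heq⟩ := hv x hx
    exact (hw.contDiff.contDiffAt.congr_of_eventuallyEq heq).contDiffWithinAt
  have between (x : E) (hx : x ∈ Ω) : u x ≤ v x ∧ v x ≤ u x + h x := by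
    obtain ⟨w, hw, le_w, heq⟩ := hv x hx
    rw [heq.eq_of_nhds]
    exact ⟨le_w, hw.le x hx⟩
  have hessian_pos (x : E) (hx : x ∈ Ω) (y : E) (hy : y ≠ 0) :
      0 < fderiv ℝ (fderiv ℝ v) x y y := by
    obtain ⟨w, hw, -, heq⟩ := hv x hx
    rw [heq.fderiv.fderiv_eq]
    exact hw.hessian_pos x y hy
  refine ⟨v, smooth, between, hessian_pos,
    convexOn_of_hessian_nonneg hopen hconv (smooth.of_le (by norm_cast)) fun x hx w ↦ ?_⟩
  rcases eq_or_ne w 0 with rfl | hw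
  · simp
  · exact (hessian_pos x hx w hw).le

end Approximation


/-- Proposition 3.4 of the paper: a strictly convex function `u` on an open convex set
`Ω ⊆ ℝⁿ` (in the supporting-affine-function sense) can be approximated from above, within any
continuous positive error `h`, by a `C^∞` function `ũ` with positive definite Hessian
(in particular, `ũ` is convex). -/
theorem stmt_14 (n : ℕ) (Ω : Set (Fin n → ℝ)) (hopen : IsOpen Ω) (hconv : Convex ℝ Ω)
    (u : (Fin n → ℝ) → ℝ)
    (hstrict : ∀ x₀ ∈ Ω, ∃ (a : Fin n → ℝ) (b : ℝ),
      (∀ x ∈ Ω, (∑ i, a i * x i) + b ≤ u x) ∧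
      (∀ x ∈ Ω, u x = (∑ i, a i * x i) + b ↔ x = x₀))
    (h : (Fin n → ℝ) → ℝ) (hcont : ContinuousOn h Ω) (hpos : ∀ x ∈ Ω, 0 < h x) :
    ∃ v : (Fin n → ℝ) → ℝ,
      ContDiffOn ℝ (⊤ : ℕ∞) v Ω ∧
      (∀ x ∈ Ω, u x ≤ v x ∧ v x ≤ u x + h x) ∧
      (∀ x ∈ Ω, ∀ w : Fin n → ℝ, w ≠ 0 → 0 < fderiv ℝ (fderiv ℝ v) x w w) ∧
      ConvexOn ℝ Ω v :=
  stmt_14_general hopen hconv (strictlySupportedOn_of_sum_mul_add hstrict)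
    hcont.lowerSemicontinuousOn hpos
end

section
/- Let n ≥ 2 and let C ⊆ ℝⁿ be an open convex set such that Σ_{k≠i} λ_k > 0 for every λ ∈ C and every i ∈ {1,…,n}. Let g : C → ℝ be concave and let ε > 0. Then the function u(λ) := −g(λ) − (ε/n)·Σ_{i=1}^n arctan(Σ_{k≠i} λ_k) is strictly convex on C, in the sense that for every x₀ ∈ C there exists an affine function l with u ≥ l on C and u(x) = l(x) if and only if x = x₀. In particular, the Hessian of λ ↦ −Σ_{i=1}^n arctan(Σ_{k≠i} λ_k) is positive definite at every point of C. -/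
/-- The function `u(λ) = −g(λ) − (ε/n)·Σᵢ arctan(Σ_{k≠i} λ_k)` of Lemma 3.6 of the paper. -/
noncomputable def stmtU (n : ℕ) (g : (Fin n → ℝ) → ℝ) (ε : ℝ) (x : Fin n → ℝ) : ℝ :=
  -g x - (ε / (n : ℝ)) * ∑ i, Real.arctan (∑ k ∈ Finset.univ.erase i, x k)

/-!
Since `arctan'' < 0` on `(0, ∞)` and the partial sums `Tᵢ(λ) = Σ_{k≠i} λ_k` are jointly injective
linear functionals, `Σᵢ arctan (Tᵢ λ)` is strictly concave wherever all `Tᵢ` are positive, so `u`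
is strictly convex. Hahn–Banach, applied to the open strict epigraph of `u`, gives a supporting
affine function at each point; it touches `u` at that point only, as otherwise strict convexity
would put `u` below it at a midpoint. The Hessian of `-Σᵢ arctan (Tᵢ λ)` is the quadratic form
`w ↦ Σᵢ -arctan'' (Tᵢ λ) (Tᵢ w)²`.
-/

section SupportingFunctional

theorem isOpen_strict_epigraph {X α : Type*} [TopologicalSpace X] [TopologicalSpace α]
    [LinearOrder α] [OrderClosedTopology α] {s : Set X} {f : X → α} (hs : IsOpen s)
    (hf : ContinuousOn f s) : IsOpen {p : X × α | p.1 ∈ s ∧ f p.1 < p.2} := by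
  have hcont : ContinuousOn (fun p : X × α ↦ (f p.1, p.2)) (Prod.fst ⁻¹' s) :=
    (hf.comp continuousOn_fst fun _ hp ↦ hp).prodMk continuousOn_snd
  exact hcont.isOpen_inter_preimage (hs.preimage continuous_fst) isOpen_lt_prod

variable {E : Type*} [AddCommGroup E] [Module ℝ E] [TopologicalSpace E] [IsTopologicalAddGroup E]
  [ContinuousSMul ℝ E] {s : Set E} {f : E → ℝ} {x₀ : E}

theorem exists_supporting_functional_of_convexOn (hs : IsOpen s) (hf : ConvexOn ℝ s f)
    (hcont : ContinuousOn f s) (hx₀ : x₀ ∈ s) :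
    ∃ φ : E →L[ℝ] ℝ, ∀ x ∈ s, f x₀ + φ (x - x₀) ≤ f x := by
  obtain ⟨F, hF⟩ := geometric_hahn_banach_open_point hf.convex_strict_epigraph
    (isOpen_strict_epigraph hs hcont) (x := (x₀, f x₀)) (fun h ↦ lt_irrefl _ h.2)
  let c := -F (0, 1)
  have F_apply (x : E) (t : ℝ) : F (x, t) = F (x, 0) - c * t := by
    rw [neg_mul, sub_neg_eq_add, mul_comm, ← smul_eq_mul, ← map_smul, ← map_add]
    simp
  have separation {x : E} (hx : x ∈ s) {t : ℝ} (ht : f x < t) :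
      F (x, 0) - F (x₀, 0) < c * (t - f x₀) := by
    have := hF (x, t) ⟨hx, ht⟩
    rw [F_apply x, F_apply x₀] at this
    linarith
  have c_pos : 0 < c := by
    have := separation hx₀ (lt_add_one (f x₀))
    linarith
  refine ⟨c⁻¹ • F.comp (.inl ℝ E ℝ), fun x hx ↦ le_of_forall_gt_imp_ge_of_dense fun t ht ↦ ?_⟩
  have F_sub : F (x - x₀, 0) = F (x, 0) - F (x₀, 0) := by
    rw [← map_sub]
    simp
  have : c⁻¹ * F (x - x₀, 0) ≤ t - f x₀ :=
    (inv_mul_le_iff₀ c_pos).2 (F_sub ▸ (separation hx ht).le)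
  simpa [add_comm] using le_sub_iff_add_le.1 this

theorem exists_supporting_functional_of_strictConvexOn (hs : IsOpen s)
    (hf : StrictConvexOn ℝ s f) (hcont : ContinuousOn f s) (hx₀ : x₀ ∈ s) :
    ∃ φ : E →L[ℝ] ℝ, ∀ x ∈ s, x ≠ x₀ → f x₀ + φ (x - x₀) < f x := by
  obtain ⟨φ, hφ⟩ := exists_supporting_functional_of_convexOn hs hf.convexOn hcont hx₀
  refine ⟨φ, fun x hx hne ↦ ?_⟩
  set m := (1 / 2 : ℝ) • x + (1 / 2 : ℝ) • x₀
  have hm : m ∈ s := hf.1 hx hx₀ (by norm_num) (by norm_num) (by norm_num)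
  have f_mid_lt : f m < (1 / 2 : ℝ) • f x + (1 / 2 : ℝ) • f x₀ :=
    hf.2 hx hx₀ hne (by norm_num) (by norm_num) (by norm_num)
  have φ_mid : φ (m - x₀) = 1 / 2 * φ (x - x₀) := by
    rw [← smul_eq_mul, ← map_smul]
    congr 1
    module
  have := hφ m hm
  simp only [smul_eq_mul] at f_mid_lt
  linarith

theorem exists_affine_le_and_eq_iff_of_strictConvexOn {ι : Type*} [Fintype ι] {s : Set (ι → ℝ)}
    {f : (ι → ℝ) → ℝ} {x₀ : ι → ℝ} (hs : IsOpen s) (hf : StrictConvexOn ℝ s f) (hx₀ : x₀ ∈ s) :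
    ∃ (a : ι → ℝ) (b : ℝ), (∀ x ∈ s, (∑ i, a i * x i) + b ≤ f x) ∧
      ∀ x ∈ s, f x = (∑ i, a i * x i) + b ↔ x = x₀ := by
  classical
  obtain ⟨φ, hφ⟩ := exists_supporting_functional_of_strictConvexOn hs hf
    (hf.convexOn.continuousOn hs) hx₀
  let a i := φ (fun j ↦ if i = j then 1 else 0)
  have affine_eq (x : ι → ℝ) : (∑ i, a i * x i) + (f x₀ - φ x₀) = f x₀ + φ (x - x₀) := by
    have : φ x = ∑ i, x i * a i := (φ : (ι → ℝ) →ₗ[ℝ] ℝ).pi_apply_eq_sum_univ x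
    rw [map_sub, this, Finset.sum_congr rfl fun i _ ↦ mul_comm (a i) (x i)]
    ring
  refine ⟨a, f x₀ - φ x₀, fun x hx ↦ ?_, fun x hx ↦ ?_⟩ <;> rw [affine_eq]
  · obtain rfl | hne := eq_or_ne x x₀
    · simp
    · exact (hφ x hx hne).le
  · refine ⟨fun h ↦ not_imp_comm.1 (hφ x hx) h.not_gt, ?_⟩
    rintro rfl
    simp

end SupportingFunctional

section StrictConcavity

variable {𝕜 E F β : Type*} [PartialOrder 𝕜] [AddCommMonoid E] [AddCommMonoid β] [PartialOrder β]

theorem strictConcaveOn_const_smul [CommSemiring 𝕜] [SMul 𝕜 E] [Module 𝕜 β]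
    [PosSMulStrictMono 𝕜 β] {s : Set E} {f : E → β} {c : 𝕜} (hc : 0 < c)
    (hf : StrictConcaveOn 𝕜 s f) : StrictConcaveOn 𝕜 s fun x ↦ c • f x := by
  refine ⟨hf.1, fun x hx y hy hxy a b ha hb hab ↦ ?_⟩
  calc
    a • c • f x + b • c • f y = c • (a • f x + b • f y) := by
      rw [smul_add, smul_comm c a, smul_comm c b]
    _ < c • f (a • x + b • y) := smul_lt_smul_of_pos_left (hf.2 hx hy hxy ha hb hab) hc

theorem strictConcaveOn_sum_comp_linearMap {ι : Type*} [Fintype ι] [Semiring 𝕜] [AddCommMonoid F]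
    [Module 𝕜 E] [Module 𝕜 F] [Module 𝕜 β] [IsOrderedCancelAddMonoid β] {s : Set E}
    {t : ι → Set F} {f : ι → F → β} {T : ι → E →ₗ[𝕜] F} (hs : Convex 𝕜 s)
    (hf : ∀ i, StrictConcaveOn 𝕜 (t i) (f i)) (hT : Function.Injective fun x i ↦ T i x)
    (hst : ∀ x ∈ s, ∀ i, T i x ∈ t i) :
    StrictConcaveOn 𝕜 s fun x ↦ ∑ i, f i (T i x) := by
  refine ⟨hs, fun x hx y hy hxy a b ha hb hab ↦ ?_⟩
  obtain ⟨j, hj⟩ : ∃ j, T j x ≠ T j y := Function.ne_iff.1 (hT.ne hxy)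
  simp only [Finset.smul_sum, ← Finset.sum_add_distrib, map_add, map_smul]
  exact Finset.sum_lt_sum
    (fun i _ ↦ (hf i).concaveOn.2 (hst x hx i) (hst y hy i) ha.le hb.le hab)
    ⟨j, Finset.mem_univ j, (hf j).2 (hst x hx j) (hst y hy j) hj ha hb hab⟩

end StrictConcavity

section SecondDerivative

theorem fderiv_fderiv_sum_comp_clm {𝕜 E ι : Type*} [NontriviallyNormedField 𝕜]
    [NormedAddCommGroup E] [NormedSpace 𝕜 E] [Fintype ι] {f : ι → 𝕜 → 𝕜} {T : ι → E →L[𝕜] 𝕜}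
    {x : E} (hf : ∀ i, Differentiable 𝕜 (f i))
    (hf' : ∀ i, DifferentiableAt 𝕜 (deriv (f i)) (T i x)) (v w : E) :
    fderiv 𝕜 (fderiv 𝕜 fun y ↦ ∑ i, f i (T i y)) x v w =
      ∑ i, deriv^[2] (f i) (T i x) * T i v * T i w := by
  have first : fderiv 𝕜 (fun y ↦ ∑ i, f i (T i y)) = fun y ↦ ∑ i, deriv (f i) (T i y) • T i :=
    funext fun y ↦ (HasFDerivAt.fun_sum fun i _ ↦
      (hf i (T i y)).hasDerivAt.comp_hasFDerivAt y (T i).hasFDerivAt).fderiv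
  have second : HasFDerivAt (fun y ↦ ∑ i, deriv (f i) (T i y) • T i)
      (∑ i, (deriv^[2] (f i) (T i x) • T i).smulRight (T i)) x :=
    HasFDerivAt.fun_sum fun i _ ↦
      ((hf' i).hasDerivAt.comp_hasFDerivAt x (T i).hasFDerivAt).smul_const (T i)
  simp [first, second.fderiv]

theorem fderiv_fderiv_sum_comp_clm_pos {E ι : Type*} [NormedAddCommGroup E] [NormedSpace ℝ E]
    [Fintype ι] {f : ι → ℝ → ℝ} {T : ι → E →L[ℝ] ℝ} {x w : E} (hf : ∀ i, Differentiable ℝ (f i))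
    (hf'' : ∀ i, 0 < deriv^[2] (f i) (T i x)) (hT : Function.Injective fun y i ↦ T i y)
    (hw : w ≠ 0) : 0 < fderiv ℝ (fderiv ℝ fun y ↦ ∑ i, f i (T i y)) x w w := by
  have hf' i : DifferentiableAt ℝ (deriv (f i)) (T i x) :=
    differentiableAt_of_deriv_ne_zero (hf'' i).ne'
  obtain ⟨j, hj⟩ : ∃ j, T j w ≠ 0 := by
    simpa using Function.ne_iff.1 (hT.ne hw)
  simp only [fderiv_fderiv_sum_comp_clm hf hf', mul_assoc]
  exact Finset.sum_pos' (fun i _ ↦ mul_nonneg (hf'' i).le (mul_self_nonneg _))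
    ⟨j, Finset.mem_univ j, mul_pos (hf'' j) (mul_self_pos.2 hj)⟩

end SecondDerivative

section Arctan

theorem deriv2_arctan (s : ℝ) : deriv^[2] Real.arctan s = -(2 * s) / (1 + s ^ 2) ^ 2 := by
  have h : HasDerivAt (fun t : ℝ ↦ 1 + t ^ 2) (2 * s) s := by
    simpa using (hasDerivAt_pow 2 s).const_add 1
  simpa [Real.deriv_arctan] using (h.fun_inv (by positivity)).deriv

theorem deriv2_arctan_neg {s : ℝ} (hs : 0 < s) : deriv^[2] Real.arctan s < 0 := by
  rw [deriv2_arctan, neg_div, neg_lt_zero]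
  positivity

theorem strictConcaveOn_arctan : StrictConcaveOn ℝ (Set.Ici 0) Real.arctan :=
  strictConcaveOn_of_deriv2_neg (convex_Ici 0) Real.continuous_arctan.continuousOn fun s hs ↦
    deriv2_arctan_neg (by simpa using hs)

end Arctan

section SumErase

variable {ι R : Type*} [Fintype ι] [DecidableEq ι] [Ring R] [TopologicalSpace R]
  [ContinuousAdd R]

variable (R) in
/-- The continuous linear functional `x ↦ Σ_{k≠i} x k` on `ι → R`: the argument of the `i`-th
arctangent in the function `u` of the theorem. -/
def sumErase (i : ι) : (ι → R) →L[R] R :=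
  ∑ k ∈ Finset.univ.erase i, ContinuousLinearMap.proj k

theorem sumErase_apply (i : ι) (x : ι → R) : sumErase R i x = ∑ k ∈ Finset.univ.erase i, x k := by
  simp [sumErase]

theorem sumErase_eq_sum_sub (i : ι) (x : ι → R) : sumErase R i x = ∑ k, x k - x i := by
  rw [sumErase_apply, Finset.sum_erase_eq_sub (Finset.mem_univ i)]

theorem injective_sumErase [CharZero R] [NoZeroDivisors R] [Nontrivial ι] :
    Function.Injective fun (x : ι → R) i ↦ sumErase R i x := by
  refine (injective_iff_map_eq_zero (ContinuousLinearMap.pi (sumErase R))).2 fun x hx ↦ ?_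
  have coord_eq_sum (i : ι) : x i = ∑ k, x k := by
    rw [eq_comm, ← sub_eq_zero, ← sumErase_eq_sum_sub]
    exact congrFun hx i
  have sum_eq : ∑ k, x k = Fintype.card ι * ∑ k, x k := by
    conv_lhs => rw [Finset.sum_congr rfl fun i _ ↦ coord_eq_sum i]
    simp
  have card_ne_one : (Fintype.card ι : R) ≠ 1 := mod_cast Fintype.one_lt_card.ne'
  have sum_eq_zero : ∑ k, x k = 0 := by
    by_contra h
    exact card_ne_one (mul_right_cancel₀ h (by rw [← sum_eq, one_mul]))
  exact funext fun i ↦ (coord_eq_sum i).trans sum_eq_zero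

end SumErase

section ArctanSumErase

variable {ι : Type*} [Fintype ι] [DecidableEq ι] [Nontrivial ι]

theorem strictConcaveOn_sum_arctan_sum_erase {s : Set (ι → ℝ)} (hs : Convex ℝ s)
    (hnonneg : ∀ x ∈ s, ∀ i, 0 ≤ ∑ k ∈ Finset.univ.erase i, x k) :
    StrictConcaveOn ℝ s fun x ↦ ∑ i, Real.arctan (∑ k ∈ Finset.univ.erase i, x k) := by
  simp only [← sumErase_apply (R := ℝ)] at hnonneg ⊢
  exact strictConcaveOn_sum_comp_linearMap (T := fun i ↦ (sumErase ℝ i).toLinearMap) hs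
    (fun _ ↦ strictConcaveOn_arctan) injective_sumErase hnonneg

theorem hessian_neg_sum_arctan_sum_erase_pos {x w : ι → ℝ}
    (hx : ∀ i, 0 < ∑ k ∈ Finset.univ.erase i, x k) (hw : w ≠ 0) :
    0 < fderiv ℝ (fderiv ℝ fun y : ι → ℝ ↦
      -∑ i, Real.arctan (∑ k ∈ Finset.univ.erase i, y k)) x w w := by
  simp only [← Finset.sum_neg_distrib, ← sumErase_apply (R := ℝ)] at hx ⊢
  refine fderiv_fderiv_sum_comp_clm_pos (f := fun _ s ↦ -Real.arctan s)
    (fun _ ↦ Real.differentiable_arctan.fun_neg) (fun i ↦ ?_) injective_sumErase hw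
  simpa [deriv.fun_neg'] using deriv2_arctan_neg (hx i)

end ArctanSumErase

theorem strictConvexOn_stmtU {n : ℕ} (hn : 2 ≤ n) {C : Set (Fin n → ℝ)}
    (hnonneg : ∀ x ∈ C, ∀ i : Fin n, 0 ≤ ∑ k ∈ Finset.univ.erase i, x k)
    {g : (Fin n → ℝ) → ℝ} (hconc : ConcaveOn ℝ C g) {ε : ℝ} (hε : 0 < ε) :
    StrictConvexOn ℝ C (stmtU n g ε) := by
  have : Nontrivial (Fin n) := Fin.nontrivial_iff_two_le.2 hn
  have coeff_pos : 0 < ε / n := div_pos hε (Nat.cast_pos.2 (by lia))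
  exact hconc.neg.sub_strictConcaveOn
    (strictConcaveOn_const_smul coeff_pos (strictConcaveOn_sum_arctan_sum_erase hconc.1 hnonneg))

/-- Lemma 3.6 of the paper: if `g` is concave on an open convex set `C ⊆ ℝⁿ` (`n ≥ 2`) on which
all the partial sums `Σ_{k≠i} λ_k` are positive, then for any `ε > 0` the function
`u(λ) = −g(λ) − (ε/n)·Σᵢ arctan(Σ_{k≠i} λ_k)` is strictly convex on `C` in the
supporting-affine-function sense; in particular, the Hessian of
`λ ↦ −Σᵢ arctan(Σ_{k≠i} λ_k)` is positive definite at every point of `C`. -/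
theorem stmt_15 (n : ℕ) (hn : 2 ≤ n) (C : Set (Fin n → ℝ))
    (hopen : IsOpen C) (hconv : Convex ℝ C)
    (hpos : ∀ x ∈ C, ∀ i : Fin n, 0 < ∑ k ∈ Finset.univ.erase i, x k)
    (g : (Fin n → ℝ) → ℝ) (hconc : ConcaveOn ℝ C g)
    (ε : ℝ) (hε : 0 < ε) :
    (∀ x₀ ∈ C, ∃ (a : Fin n → ℝ) (b : ℝ),
      (∀ x ∈ C, (∑ i, a i * x i) + b ≤ stmtU n g ε x) ∧
      (∀ x ∈ C, stmtU n g ε x = (∑ i, a i * x i) + b ↔ x = x₀)) ∧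
    (∀ x ∈ C, ∀ w : Fin n → ℝ, w ≠ 0 →
      0 < fderiv ℝ (fderiv ℝ (fun y : Fin n → ℝ =>
        -∑ i, Real.arctan (∑ k ∈ Finset.univ.erase i, y k))) x w w) := by
  have : Nontrivial (Fin n) := Fin.nontrivial_iff_two_le.2 hn
  have strictConvex_u : StrictConvexOn ℝ C (stmtU n g ε) :=
    strictConvexOn_stmtU hn (fun x hx i ↦ (hpos x hx i).le) hconc hε
  exact ⟨fun _ hx₀ ↦ exists_affine_le_and_eq_iff_of_strictConvexOn hopen strictConvex_u hx₀,
    fun x hx _ hw ↦ hessian_neg_sum_arctan_sum_erase_pos (hpos x hx) hw⟩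
end
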